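/- Let (U,ρ) be a complete metric space, let g ∈ W(ℝ,U), let p ≥ 1, and let F ∈ W_p(ℝ, cl_b U). Then for any increasing function η : [0,+∞) → [0,+∞) with η(0) = 0 and η(t) > 0 for every t > 0, there exists a function f ∈ W_p(ℝ,U) such that Mod f ⊆ Mod g + Mod F, f(t) ∈ F(t) for a.e. t ∈ ℝ, and ρ(f(t), g(t)) ≤ ρ(g(t), F(t)) + η(ρ(g(t), F(t))) for a.e. t ∈ ℝ (where ρ(x,A) = inf_{y∈A} ρ(x,y)). -/

import Mathlib

open MeasureTheory Filter Topology TopologicalSpace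
open scoped ENNReal Pointwise

noncomputable section

/-- The truncated ("bounded") distance `ρ'(x,y) = min {1, ρ(x,y)}` on a metric space. -/
def bdist {α : Type*} [PseudoMetricSpace α] : α → α → ℝ := fun x y => min 1 (dist x y)

/-- The Hausdorff distance `dist_{ρ'}` (corresponding to the truncated metric `ρ'`)
between non-empty closed subsets of a metric space. -/
def clDist {α : Type*} [MetricSpace α] : Closeds α → Closeds α → ℝ :=
  fun A B => (min 1 (EMetric.hausdorffEdist (A : Set α) (B : Set α))).toReal

/-- The Hausdorff distance `dist_ρ` between (non-empty closed bounded) subsets. -/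
def clbDist {α : Type*} [MetricSpace α] : Closeds α → Closeds α → ℝ :=
  fun A B => Metric.hausdorffDist (A : Set α) (B : Set α)

/-- `D^{(d)}_{p,l}(f,g) = ( sup_ξ (1/l) ∫_ξ^{ξ+l} d(f t, g t)^p dt )^{1/p}`,
valued in `ℝ≥0∞`. -/
def weylD {α : Type*} (d : α → α → ℝ) (p l : ℝ) (f g : ℝ → α) : ℝ≥0∞ :=
  (⨆ ξ : ℝ, ENNReal.ofReal (1 / l) *
      ∫⁻ t in Set.Icc ξ (ξ + l), ENNReal.ofReal (d (f t) (g t) ^ p)) ^ (1 / p)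

/-- The Weyl semimetric `D^{(d)}_p(f,g) = lim_{l → +∞} D^{(d)}_{p,l}(f,g)`
(the limit exists; it is formalized here as a `limsup`). -/
def weylDinf {α : Type*} (d : α → α → ℝ) (p : ℝ) (f g : ℝ → α) : ℝ≥0∞ :=
  Filter.limsup (fun l => weylD d p l f g) Filter.atTop

/-- Membership in `M_p(ℝ, α)`: `f` is (strongly) measurable and
`sup_ξ ∫_ξ^{ξ+1} d(f t, x₀)^p dt < +∞`. -/
def MemMp {α : Type*} [TopologicalSpace α] (d : α → α → ℝ) (p : ℝ) (x₀ : α)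
    (f : ℝ → α) : Prop :=
  AEStronglyMeasurable f MeasureTheory.volume ∧
  ∃ C : ℝ, ∀ ξ : ℝ,
    (∫⁻ t in Set.Icc ξ (ξ + 1), ENNReal.ofReal (d (f t) x₀ ^ p)) ≤ ENNReal.ofReal C

/-- A set `T ⊆ ℝ` is relatively dense. -/
def RelDense (T : Set ℝ) : Prop := ∃ a > 0, ∀ ξ : ℝ, (Set.Icc ξ (ξ + a) ∩ T).Nonempty

/-- The set of `(ε, D^{(d)}_{p,l})`-almost periods of `f`. -/
def APeriodsL {α : Type*} (d : α → α → ℝ) (p l ε : ℝ) (f : ℝ → α) : Set ℝ :=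
  {τ | weylD d p l f (fun t => f (t + τ)) < ENNReal.ofReal ε}

/-- The set `P^{(d)}_p(ε; f)` of `(ε, D^{(d)}_p)`-almost periods of `f`. -/
def APeriods {α : Type*} (d : α → α → ℝ) (p ε : ℝ) (f : ℝ → α) : Set ℝ :=
  {τ | weylDinf d p f (fun t => f (t + τ)) < ENNReal.ofReal ε}

/-- Membership in the space `W_p(ℝ, α)` of Weyl almost periodic functions of order `p`
w.r.t. the distance `d` (with distinguished point `x₀`). -/
def MemWp {α : Type*} [TopologicalSpace α] (d : α → α → ℝ) (p : ℝ) (x₀ : α)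
    (f : ℝ → α) : Prop :=
  MemMp d p x₀ f ∧ ∀ ε > 0, ∃ l > 0, RelDense (APeriodsL d p l ε f)

/-- The module `Mod f`: the additive group of all `λ ∈ ℝ` such that `e^{iλτ_j} → 1`
for every `f`-returning sequence `{τ_j}` (a sequence with `D^{(d)}_1(f, f(·+τ_j)) → 0`,
where `d` is the relevant bounded distance). -/
def WMod {α : Type*} (d : α → α → ℝ) (f : ℝ → α) : Set ℝ :=
  {lam : ℝ | ∀ τ : ℕ → ℝ,
    Tendsto (fun j => weylDinf d 1 f (fun t => f (t + τ j))) atTop (nhds 0) →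
    Tendsto (fun j => Complex.exp (Complex.I * ((lam * τ j : ℝ) : ℂ))) atTop (nhds 1)}

/-- `κ_W(T) = lim_{l → +∞} sup_ξ (1/l) meas([ξ, ξ+l] ∩ T)` (formalized as a `limsup`). -/
def kappaW (T : Set ℝ) : ℝ≥0∞ :=
  Filter.limsup (fun l : ℝ => ⨆ ξ : ℝ,
    ENNReal.ofReal (1 / l) * MeasureTheory.volume (Set.Icc ξ (ξ + l) ∩ T)) Filter.atTop

/-- Membership in `M*_p(ℝ, α)`. -/
def MemMpStar {α : Type*} [TopologicalSpace α] (d : α → α → ℝ) (p : ℝ) (x₀ : α)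
    (f : ℝ → α) : Prop :=
  MemMp d p x₀ f ∧
  ∀ ε > 0, ∃ δ > 0, ∀ T : Set ℝ, MeasurableSet T → kappaW T < ENNReal.ofReal δ →
    Filter.limsup (fun l : ℝ => ⨆ ξ : ℝ, ENNReal.ofReal (1 / l) *
        ∫⁻ t in Set.Icc ξ (ξ + l) ∩ T, ENNReal.ofReal (d (f t) x₀ ^ p)) Filter.atTop
      < ENNReal.ofReal ε

/-- Distance from a point to a set w.r.t. the distance `d`, valued in `ℝ≥0∞`
(`∞` for the empty set). -/
def dInfDist {α : Type*} (d : α → α → ℝ) (x : α) (K : Set α) : ℝ≥0∞ :=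
  ⨅ y ∈ K, ENNReal.ofReal (d x y)

/-- Membership in `W̃_p(ℝ, α)`: conditions 1) (relatively dense sets of
`(ε, D^{(d)}_p)`-almost periods) and 2) (approximate compactness of values). -/
def MemWpTilde {α : Type*} [TopologicalSpace α] (d : α → α → ℝ) (p : ℝ) (x₀ : α)
    (f : ℝ → α) : Prop :=
  MemMp d p x₀ f ∧
  (∀ ε > 0, RelDense (APeriods d p ε f)) ∧
  (∀ ε > 0, ∀ δ > 0, ∃ K : Set α, IsCompact K ∧
      kappaW {t | ENNReal.ofReal ε ≤ dInfDist d (f t) K} < ENNReal.ofReal δ)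

/-- The support of a Borel measure on a topological space. -/
def measSupport {α : Type*} [TopologicalSpace α] [MeasurableSpace α]
    (μ : Measure α) : Set α :=
  {x | ∀ V : Set α, IsOpen V → x ∈ V → 0 < μ V}

/-- `r_δ(x, μ) = inf { r > 0 : μ[U_r(x)] > δ }`. -/
def rdelta {α : Type*} [PseudoMetricSpace α] [MeasurableSpace α]
    (x : α) (μ : Measure α) (δ : ℝ) : ℝ :=
  sInf {r : ℝ | 0 < r ∧ ENNReal.ofReal δ < μ (Metric.ball x r)}

/-- The Lévy–Prokhorov distance on Borel probability measures. -/
def lpDist {α : Type*} [MeasurableSpace α] [PseudoEMetricSpace α] :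
    ProbabilityMeasure α → ProbabilityMeasure α → ℝ :=
  fun μ ν => MeasureTheory.levyProkhorovDist (μ : Measure α) (ν : Measure α)

end


section Fourier
open scoped FourierTransform Convolution ComplexConjugate

/-- Autocorrelation. -/
noncomputable def acorr (a : ℝ → ℂ) (t : ℝ) : ℂ := ∫ s, a s * conj (a (s - t))

lemma acorr_eq_conv (a : ℝ → ℂ) :
    acorr a = (a ⋆[ContinuousLinearMap.mul ℂ ℂ] (fun s => conj (a (-s)))) := by
  ext t
  simp [acorr, convolution]

lemma acorr_fourier (a : ℝ → ℂ) (ha : Integrable a) (x : ℝ) :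
    𝓕 (acorr a) x = ((‖𝓕 a x‖ ^ 2 : ℝ) : ℂ) := by
  have h2 : Integrable (fun s => conj (a (-s))) := by
    have := ha.comp_neg
    exact (Complex.conjLIE.toContinuousLinearEquiv.integrable_comp_iff).2 this
  rw [acorr_eq_conv, Real.fourier_mul_convolution_eq ha h2]
  have : 𝓕 (fun s => conj (a (-s))) x = conj (𝓕 a x) := by
    rw [Real.fourier_real_eq_integral_exp_smul, Real.fourier_real_eq_integral_exp_smul,
      ← integral_conj, ← integral_neg_eq_self]
    congr 1
    ext s
    simp only [neg_neg, smul_eq_mul, map_mul, ← Complex.exp_conj, Complex.conj_ofReal,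
      Complex.conj_I]
    congr 2
    push_cast
    ring
  rw [this, Complex.mul_conj, Complex.normSq_eq_norm_sq]

lemma acorr_cont (a : ℝ → ℂ) (ha : Continuous a) (hs : HasCompactSupport a) :
    Continuous (acorr a) ∧ HasCompactSupport (acorr a) := by
  have hs2 : HasCompactSupport (fun s => conj (a (-s))) :=
    (hs.comp_homeomorph (Homeomorph.neg ℝ)).comp_left (g := conj) (by simp)
  rw [acorr_eq_conv]
  refine ⟨hs2.continuous_convolution_right _ ha.locallyIntegrable (by fun_prop), ?_⟩
  exact HasCompactSupport.convolution _ hs hs2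

lemma gauss_flip (f : ℝ → ℂ) (hf : Integrable f) (hc : Continuous f) :
    Tendsto (fun c : ℝ => ∫ w : ℝ, Complex.exp (- c⁻¹ * ‖w‖ ^ 2) • (𝓕 f) w) atTop (𝓝 (f 0)) := by
  have B := Real.tendsto_integral_gaussian_smul' hf (v := 0) hc.continuousAt
  refine B.congr' ?_
  filter_upwards [Ioi_mem_atTop 0] with c (hc : 0 < c)
  have J : Integrable (fun w : ℝ ↦ Complex.exp (- c⁻¹ * ‖w‖ ^ 2 + 2 * Real.pi * Complex.I * inner ℝ (0:ℝ) w)) :=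
      GaussianFourier.integrable_cexp_neg_mul_sq_norm_add (by simpa) _ _
  have := (VectorFourier.integral_fourierIntegral_smul_eq_flip (L := innerₗ ℝ)
      Real.continuous_fourierChar continuous_inner J hf)
  have h2 : ∀ w : ℝ, 𝓕 (fun w : ℝ ↦ Complex.exp (- c⁻¹ * ‖w‖ ^ 2 + 2 * Real.pi * Complex.I * inner ℝ (0:ℝ) w)) w
     = ((Real.pi * c : ℂ) ^ ((Module.finrank ℝ ℝ : ℂ) / 2 : ℂ) * Complex.exp (-Real.pi ^ 2 * c * ‖(0:ℝ) - w‖ ^ 2)) := by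
    intro w
    have h3 := fourier_gaussian_innerProductSpace' (V := ℝ) (b := ((c⁻¹ : ℝ) : ℂ)) (by simpa) (0:ℝ) w
    rw [h3]
    congr
    · simp
    · simp; ring
  have h4 : (∫ w : ℝ, ((Real.pi * c : ℂ) ^ ((Module.finrank ℝ ℝ : ℂ) / 2 : ℂ) * Complex.exp (-Real.pi ^ 2 * c * ‖(0:ℝ) - w‖ ^ 2)) • f w)
    = ∫ w : ℝ, 𝓕 (fun w : ℝ ↦ Complex.exp (- c⁻¹ * ‖w‖ ^ 2 + 2 * Real.pi * Complex.I * inner ℝ (0:ℝ) w)) w • f w := by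
    congr 1
    ext w
    rw [h2]
  rw [h4]
  refine Eq.trans this ?_
  congr 1
  ext w
  have h5 : VectorFourier.fourierIntegral Real.fourierChar volume (innerₗ ℝ).flip f w = 𝓕 f w := by
    simp [Real.fourier_eq, VectorFourier.fourierIntegral, real_inner_comm]
  rw [h5]
  simp

lemma acorr_integrable (a : ℝ → ℂ) (ha : Continuous a) (hs : HasCompactSupport a) :
    Integrable (fun x => ‖𝓕 a x‖ ^ 2) ∧ ∫ x, ‖𝓕 a x‖ ^ 2 ≤ ∫ s, ‖a s‖ ^ 2 := by
  have hai := ha.integrable_of_hasCompactSupport (μ := volume) hs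
  obtain ⟨hc, hcs⟩ := acorr_cont a ha hs
  have hci := hc.integrable_of_hasCompactSupport (μ := volume) hcs
  have hT := gauss_flip _ hci hc
  have h0 : acorr a 0 = ((∫ s, ‖a s‖ ^ 2 : ℝ) : ℂ) := by
    rw [acorr, ← integral_complex_ofReal]
    congr 1; ext s
    simp [Complex.mul_conj, Complex.normSq_eq_norm_sq]
  have hcont : Continuous (fun x => ‖𝓕 a x‖ ^ 2) := by
    have : Continuous (𝓕 a) := VectorFourier.fourierIntegral_continuous Real.continuous_fourierChar
      (L := innerₗ ℝ) continuous_inner hai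
    fun_prop
  have hIntg : ∀ c : ℝ, 0 < c → Integrable (fun w : ℝ => Real.exp (-c⁻¹ * w ^ 2) * ‖𝓕 a w‖ ^ 2) := by
    intro c hc
    have hb : ∀ w, ‖𝓕 a w‖ ^ 2 ≤ (∫ s, ‖a s‖) ^ 2 := by
      intro w
      gcongr
      exact VectorFourier.norm_fourierIntegral_le_integral_norm _ _ _ _ _
    refine Integrable.mono' ((integrable_exp_neg_mul_sq (b := c⁻¹) (by positivity)).mul_const
      ((∫ s, ‖a s‖) ^ 2)) (by fun_prop) (Eventually.of_forall fun w => ?_)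
    rw [Real.norm_of_nonneg (by positivity)]
    exact mul_le_mul_of_nonneg_left (hb w) (Real.exp_nonneg _)
  have hT2 : Tendsto (fun c : ℝ => ∫ w : ℝ, Real.exp (-c⁻¹ * w ^ 2) * ‖𝓕 a w‖ ^ 2) atTop
      (𝓝 (∫ s, ‖a s‖ ^ 2)) := by
    rw [h0] at hT
    have := (Complex.continuous_re.tendsto _).comp hT
    refine this.congr (fun c => ?_)
    simp only [Function.comp]
    have : (∫ w : ℝ, Complex.exp (- c⁻¹ * ‖w‖ ^ 2) • (𝓕 (acorr a)) w)
      = ((∫ w : ℝ, Real.exp (-c⁻¹ * w ^ 2) * ‖𝓕 a w‖ ^ 2 : ℝ) : ℂ) := by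
      rw [← integral_complex_ofReal]
      congr 1; ext w
      rw [acorr_fourier a hai]
      push_cast
      simp only [smul_eq_mul]
      congr 2
      norm_cast
      simp
    rw [this, Complex.ofReal_re]
  have hle : ∫⁻ x, ENNReal.ofReal (‖𝓕 a x‖ ^ 2) ≤ ENNReal.ofReal (∫ s, ‖a s‖ ^ 2) := by
    have hseq : Tendsto (fun n : ℕ => ∫⁻ w : ℝ, ENNReal.ofReal (Real.exp (-((n:ℝ)+1)⁻¹ * w ^ 2) * ‖𝓕 a w‖ ^ 2))
        atTop (𝓝 (ENNReal.ofReal (∫ s, ‖a s‖ ^ 2))) := by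
      have h1 := (ENNReal.continuous_ofReal.tendsto _).comp (hT2.comp
        (tendsto_natCast_atTop_atTop.atTop_add (tendsto_const_nhds (x := (1:ℝ)))))
      refine h1.congr (fun n => ?_)
      simp only [Function.comp]
      rw [ofReal_integral_eq_lintegral_ofReal (hIntg _ (by positivity))
        (Eventually.of_forall fun w => by positivity)]
    calc ∫⁻ x, ENNReal.ofReal (‖𝓕 a x‖ ^ 2)
        = ∫⁻ x, liminf (fun n : ℕ => ENNReal.ofReal (Real.exp (-((n:ℝ)+1)⁻¹ * x ^ 2) * ‖𝓕 a x‖ ^ 2)) atTop := by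
          congr 1; ext x
          symm
          apply Tendsto.liminf_eq
          apply (ENNReal.continuous_ofReal.tendsto _).comp
          have h1 : Tendsto (fun n : ℕ => ((n:ℝ)+1)⁻¹) atTop (𝓝 0) :=
            tendsto_inv_atTop_zero.comp (tendsto_natCast_atTop_atTop.atTop_add (tendsto_const_nhds (x := (1:ℝ))))
          have h2 : Tendsto (fun n : ℕ => Real.exp (-((n:ℝ)+1)⁻¹ * x ^ 2) * ‖𝓕 a x‖ ^ 2) atTop
            (𝓝 (Real.exp (-0 * x ^ 2) * ‖𝓕 a x‖ ^ 2)) :=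
            ((Real.continuous_exp.tendsto _).comp (h1.neg.mul_const _)).mul_const _
          simpa using h2
      _ ≤ liminf (fun n : ℕ => ∫⁻ x, ENNReal.ofReal (Real.exp (-((n:ℝ)+1)⁻¹ * x ^ 2) * ‖𝓕 a x‖ ^ 2)) atTop := by
          apply lintegral_liminf_le
          intro n
          fun_prop
      _ = _ := hseq.liminf_eq
  have hI : Integrable (fun x => ‖𝓕 a x‖ ^ 2) := by
    refine ⟨hcont.aestronglyMeasurable, ?_⟩
    rw [hasFiniteIntegral_iff_ofReal (Eventually.of_forall fun w => by positivity)]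
    exact hle.trans_lt ENNReal.ofReal_lt_top
  refine ⟨hI, ?_⟩
  rw [← ofReal_integral_eq_lintegral_ofReal hI (Eventually.of_forall fun w => by positivity)] at hle
  exact (ENNReal.ofReal_le_ofReal_iff (integral_nonneg fun s => by positivity)).1 hle

/-- Parseval for autocorrelations, with a frequency shift. -/
lemma parseval_acorr (a b : ℝ → ℂ) (ha : Continuous a) (hs : HasCompactSupport a)
    (hb : Continuous b) (hsb : HasCompactSupport b) (l : ℝ) :
    ((∫ x, ‖𝓕 a x‖ ^ 2 * ‖𝓕 b (l - x)‖ ^ 2 : ℝ) : ℂ) =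
      ∫ t, acorr a t * acorr b t * Complex.exp (((-2 * Real.pi * l * t : ℝ) : ℂ) * Complex.I) := by
  have hai := ha.integrable_of_hasCompactSupport (μ := volume) hs
  have hbi := hb.integrable_of_hasCompactSupport (μ := volume) hsb
  obtain ⟨hc, hcs⟩ := acorr_cont a ha hs
  have hci := hc.integrable_of_hasCompactSupport (μ := volume) hcs
  obtain ⟨hcb, hcsb⟩ := acorr_cont b hb hsb
  have hcib := hcb.integrable_of_hasCompactSupport (μ := volume) hcsb
  have hPb := (acorr_integrable b hb hsb).1
  have hQ : Integrable (fun x => (((‖𝓕 b (l - x)‖ ^ 2 : ℝ)) : ℂ)) := (hPb.comp_sub_left l).ofReal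
  have hFb : Integrable (𝓕 (acorr b)) := by
    have : 𝓕 (acorr b) = fun x => ((‖𝓕 b x‖ ^ 2 : ℝ) : ℂ) := by
      ext x; exact acorr_fourier b hbi x
    rw [this]; exact hPb.ofReal
  have hinv := hcb.fourierInv_fourier_eq hcib hFb
  have key := (VectorFourier.integral_fourierIntegral_smul_eq_flip (L := innerₗ ℝ)
      Real.continuous_fourierChar continuous_inner hci hQ)
  rw [← integral_complex_ofReal]
  have e1 : ∀ x, ((‖𝓕 a x‖ ^ 2 * ‖𝓕 b (l - x)‖ ^ 2 : ℝ) : ℂ) =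
     (VectorFourier.fourierIntegral Real.fourierChar volume (innerₗ ℝ) (acorr a) x) • (((‖𝓕 b (l - x)‖ ^ 2 : ℝ)) : ℂ) := by
    intro x
    have : VectorFourier.fourierIntegral Real.fourierChar volume (innerₗ ℝ) (acorr a) x = 𝓕 (acorr a) x := rfl
    rw [this, acorr_fourier a hai]
    simp
  simp_rw [e1]
  refine key.trans ?_
  congr 1; ext t
  rw [smul_eq_mul, mul_assoc]
  congr 1
  have h5 : VectorFourier.fourierIntegral Real.fourierChar volume (innerₗ ℝ).flip
     (fun x => (((‖𝓕 b (l - x)‖ ^ 2 : ℝ)) : ℂ)) t = 𝓕 (fun x => (((‖𝓕 b (l - x)‖ ^ 2 : ℝ)) : ℂ)) t := by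
    simp [Real.fourier_eq, VectorFourier.fourierIntegral, real_inner_comm]
  rw [h5, Real.fourier_real_eq_integral_exp_smul, ← integral_sub_left_eq_self _ volume l]
  conv_rhs => rw [← hinv, Real.fourierInv_eq', mul_comm, ← integral_const_mul]
  congr 1; ext x
  rw [acorr_fourier b hbi]
  simp only [sub_sub_cancel, smul_eq_mul]
  rw [← mul_assoc, ← Complex.exp_add]
  congr 2
  simp
  ring

end Fourier


section Duality
set_option linter.unusedSectionVars false
open scoped FourierTransform

structure PN (d : ℝ → ℝ) : Prop where
  nonneg : ∀ τ, 0 ≤ d τ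
  zero : d 0 = 0
  neg : ∀ τ, d (-τ) = d τ
  add : ∀ σ τ, d (σ + τ) ≤ d σ + d τ
  cont : Tendsto d (𝓝 0) (𝓝 0)

lemma PN.lip {d : ℝ → ℝ} (h : PN d) (s t : ℝ) : |d (s + t) - d s| ≤ d t := by
  have h1 := h.add s t
  have h2 := h.add (s + t) (-t)
  rw [h.neg] at h2
  simp only [add_neg_cancel_right] at h2
  rw [abs_le]; constructor <;> linarith

lemma PN.continuous {d : ℝ → ℝ} (h : PN d) : Continuous d := by
  rw [continuous_iff_continuousAt]
  intro s
  rw [ContinuousAt, tendsto_iff_norm_sub_tendsto_zero]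
  have h1 : Tendsto (fun t => d (t - s)) (𝓝 s) (𝓝 0) := by
    refine h.cont.comp ?_
    have : Tendsto (fun t : ℝ => t - s) (𝓝 s) (𝓝 (s - s)) := (continuous_id.sub continuous_const).tendsto s
    simpa using this
  refine squeeze_zero (fun _ => norm_nonneg _) (fun t => ?_) h1
  have := h.lip s (t - s)
  simpa using this

noncomputable def theta (N s : ℝ) : ℝ := max 0 (1 - |s| / N)
noncomputable def acut (d : ℝ → ℝ) (δ N s : ℝ) : ℝ := theta N s * max 0 (1 - d s / δ)

lemma theta_nonneg (N s : ℝ) : 0 ≤ theta N s := le_max_left _ _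
lemma theta_le (N s : ℝ) (hN : 0 < N) : theta N s ≤ 1 := by
  apply max_le zero_le_one
  have : 0 ≤ |s| / N := by positivity
  linarith
lemma theta_zero (N s : ℝ) (hN : 0 < N) (h : N ≤ |s|) : theta N s = 0 := by
  apply max_eq_left
  have : 1 ≤ |s| / N := by rwa [le_div_iff₀ hN, one_mul]
  linarith
lemma theta_half (N s : ℝ) (hN : 0 < N) (h : |s| ≤ N / 2) : 1 / 2 ≤ theta N s := by
  apply le_max_of_le_right
  have : |s| / N ≤ 1 / 2 := by rw [div_le_iff₀ hN]; linarith
  linarith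
lemma abs_max_zero_sub (x y : ℝ) : |max 0 x - max 0 y| ≤ |x - y| := by
  have := abs_max_sub_max_le_max 0 x 0 y
  simpa using this
lemma theta_lip (N s τ : ℝ) (hN : 0 < N) : |theta N (s + τ) - theta N s| ≤ |τ| / N := by
  refine (abs_max_zero_sub _ _).trans ?_
  have : (1 - |s + τ| / N) - (1 - |s| / N) = (|s| - |s + τ|) / N := by ring
  rw [this, abs_div, abs_of_pos hN]
  have := abs_abs_sub_abs_le s (s + τ)
  refine div_le_div_of_nonneg_right ?_ hN.le
  simpa using this

section

lemma phi_le {d : ℝ → ℝ} (h : PN d) {δ N : ℝ} (hδ : 0 < δ) (hN : 0 < N) (s : ℝ) : max 0 (1 - d s / δ) ≤ 1 := by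
  apply max_le zero_le_one
  have : 0 ≤ d s / δ := div_nonneg (h.nonneg s) hδ.le
  linarith

lemma acut_nonneg {d : ℝ → ℝ} (h : PN d) {δ N : ℝ} (hδ : 0 < δ) (hN : 0 < N) (s : ℝ) : 0 ≤ acut d δ N s := mul_nonneg (theta_nonneg _ _) (le_max_left _ _)
lemma acut_le {d : ℝ → ℝ} (h : PN d) {δ N : ℝ} (hδ : 0 < δ) (hN : 0 < N) (s : ℝ) : acut d δ N s ≤ 1 := by
  have := mul_le_mul (theta_le N s hN) (phi_le h hδ hN s) (le_max_left _ _) zero_le_one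
  simpa [acut] using this
lemma acut_zero {d : ℝ → ℝ} (h : PN d) {δ N : ℝ} (hδ : 0 < δ) (hN : 0 < N) (s : ℝ) (hs : N ≤ |s|) : acut d δ N s = 0 := by
  rw [acut, theta_zero N s hN hs, zero_mul]
lemma acut_ne {d : ℝ → ℝ} (h : PN d) {δ N : ℝ} (hδ : 0 < δ) (hN : 0 < N) (s : ℝ) (hs : acut d δ N s ≠ 0) : d s < δ := by
  by_contra hc
  push Not at hc
  apply hs
  rw [acut, max_eq_left, mul_zero]
  have : 1 ≤ d s / δ := by rwa [le_div_iff₀ hδ, one_mul]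
  linarith
lemma acut_cont {d : ℝ → ℝ} (h : PN d) {δ N : ℝ} (hδ : 0 < δ) (hN : 0 < N) : Continuous (acut d δ N) := by
  have := h.continuous
  unfold acut theta
  fun_prop
lemma acut_supp {d : ℝ → ℝ} (h : PN d) {δ N : ℝ} (hδ : 0 < δ) (hN : 0 < N) : HasCompactSupport (acut d δ N) := by
  apply HasCompactSupport.intro (isCompact_Icc (a := -N) (b := N))
  intro s hs
  apply acut_zero h hδ hN
  by_contra hc
  push Not at hc
  exact hs ⟨(abs_lt.1 hc).1.le, (abs_lt.1 hc).2.le⟩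

lemma acut_big {d : ℝ → ℝ} (h : PN d) {δ N : ℝ} (hδ : 0 < δ) (hN : 0 < N) (s : ℝ) (hs : |s| ≤ N / 2) (hd : d s ≤ δ / 2) : 1 / 4 ≤ acut d δ N s := by
  have h1 := theta_half N s hN hs
  have h2 : 1 / 2 ≤ max 0 (1 - d s / δ) := by
    apply le_max_of_le_right
    have : d s / δ ≤ 1 / 2 := by rw [div_le_iff₀ hδ]; linarith
    linarith
  have := mul_le_mul h1 h2 (by norm_num) (theta_nonneg N s)
  unfold acut
  linarith

lemma acut_lip {d : ℝ → ℝ} (h : PN d) {δ N : ℝ} (hδ : 0 < δ) (hN : 0 < N) (s τ : ℝ) : |acut d δ N (s + τ) - acut d δ N s| ≤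
    (Set.Icc (-N - τ) (N - τ)).indicator (fun _ => d τ / δ) s +
    (Set.Icc (-N - |τ|) (N + |τ|)).indicator (fun _ => |τ| / N) s := by
  set φ : ℝ → ℝ := fun s => max 0 (1 - d s / δ)
  have e : acut d δ N (s + τ) - acut d δ N s =
    theta N (s + τ) * (φ (s + τ) - φ s) + (theta N (s + τ) - theta N s) * φ s := by
    simp only [acut, φ]; ring
  rw [e]
  refine (abs_add_le _ _).trans (add_le_add ?_ ?_)
  · rw [abs_mul, abs_of_nonneg (theta_nonneg _ _)]
    by_cases hs : s ∈ Set.Icc (-N - τ) (N - τ)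
    · rw [Set.indicator_of_mem hs]
      have h1 : |φ (s + τ) - φ s| ≤ d τ / δ := by
        refine (abs_max_zero_sub _ _).trans ?_
        have : (1 - d (s + τ) / δ) - (1 - d s / δ) = -((d (s + τ) - d s) / δ) := by ring
        rw [this, abs_neg, abs_div, abs_of_pos hδ]
        gcongr
        exact h.lip s τ
      calc theta N (s + τ) * |φ (s + τ) - φ s| ≤ 1 * (d τ / δ) :=
            mul_le_mul (theta_le _ _ hN) h1 (abs_nonneg _) zero_le_one
        _ = _ := one_mul _
    · rw [Set.indicator_of_notMem hs, theta_zero, zero_mul]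
      · exact hN
      · by_contra hc
        push Not at hc
        apply hs
        rw [abs_lt] at hc
        constructor <;> linarith
  · rw [abs_mul, abs_of_nonneg (a := φ s) (le_max_left _ _)]
    by_cases hs : s ∈ Set.Icc (-N - |τ|) (N + |τ|)
    · rw [Set.indicator_of_mem hs]
      calc |theta N (s + τ) - theta N s| * φ s ≤ (|τ| / N) * 1 :=
            mul_le_mul (theta_lip _ _ _ hN) (phi_le h hδ hN s) (le_max_left _ _) (by positivity)
        _ = _ := mul_one _
    · rw [Set.indicator_of_notMem hs]
      have hbig : N + |τ| < |s| := by
        by_contra hc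
        push Not at hc
        apply hs
        rw [abs_le] at hc
        constructor <;> linarith
      rw [theta_zero N s hN (by have := abs_nonneg τ; linarith), theta_zero N (s + τ) hN]
      · simp
      · have h3 := abs_sub_abs_le_abs_sub s (-τ)
        rw [sub_neg_eq_add, abs_neg] at h3
        linarith

lemma acut_int_lip {d : ℝ → ℝ} (h : PN d) {δ N : ℝ} (hδ : 0 < δ) (hN : 0 < N) (τ : ℝ) : ∫ s, |acut d δ N (s + τ) - acut d δ N s| ≤
    2 * N * (d τ / δ) + 2 * (N + |τ|) * (|τ| / N) := by
  have i1 : Integrable (fun s => (Set.Icc (-N - τ) (N - τ)).indicator (fun _ => d τ / δ) s) :=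
    (integrable_indicator_iff measurableSet_Icc).2 (by simp)
  have i2 : Integrable (fun s => (Set.Icc (-N - |τ|) (N + |τ|)).indicator (fun _ => |τ| / N) s) :=
    (integrable_indicator_iff measurableSet_Icc).2 (by simp)
  calc ∫ s, |acut d δ N (s + τ) - acut d δ N s| ≤ _ :=
        integral_mono_of_nonneg (Eventually.of_forall fun _ => abs_nonneg _) (i1.add i2)
          (Eventually.of_forall fun s => acut_lip h hδ hN s τ)
    _ = _ := by
      simp only [Pi.add_apply]
      rw [integral_add i1 i2, integral_indicator measurableSet_Icc, integral_indicator measurableSet_Icc]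
      have := abs_nonneg τ
      simp only [integral_const, MeasurableSet.univ, measureReal_restrict_apply, Set.univ_inter,
        Real.volume_real_Icc, smul_eq_mul]
      rw [max_eq_left (by linarith), max_eq_left (by linarith)]
      ring

lemma acut_sq {d : ℝ → ℝ} (h : PN d) {δ N : ℝ} (hδ : 0 < δ) (hN : 0 < N) : ∫ s, ‖((acut d δ N s : ℝ) : ℂ)‖ ^ 2 ≤ 2 * N := by
  have i1 : Integrable (fun s => (Set.Icc (-N) N).indicator (fun _ => (1 : ℝ)) s) :=
    (integrable_indicator_iff measurableSet_Icc).2 (by simp)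
  calc ∫ s, ‖((acut d δ N s : ℝ) : ℂ)‖ ^ 2 ≤ ∫ s, (Set.Icc (-N) N).indicator (fun _ => (1 : ℝ)) s := by
        refine integral_mono_of_nonneg (Eventually.of_forall fun _ => by positivity) i1
          (Eventually.of_forall fun s => ?_)
        simp only [Complex.norm_real, Real.norm_eq_abs, sq_abs]
        by_cases hs : s ∈ Set.Icc (-N) N
        · rw [Set.indicator_of_mem hs]
          have h1 := acut_nonneg h hδ hN s
          have h2 := acut_le h hδ hN s
          nlinarith
        · rw [Set.indicator_of_notMem hs, acut_zero h hδ hN]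
          · simp
          · by_contra hc
            push Not at hc
            exact hs ⟨(abs_lt.1 hc).1.le, (abs_lt.1 hc).2.le⟩
    _ = _ := by
      rw [integral_indicator measurableSet_Icc]
      simp only [integral_const, MeasurableSet.univ, measureReal_restrict_apply, Set.univ_inter,
        Real.volume_real_Icc, smul_eq_mul]
      rw [max_eq_left (by linarith)]
      ring

lemma acut_fourier_transl {d : ℝ → ℝ} (h : PN d) {δ N : ℝ} (hδ : 0 < δ) (hN : 0 < N) (x τ : ℝ) :
    ‖Complex.exp (Complex.I * ((2 * Real.pi * x * τ : ℝ) : ℂ)) - 1‖ *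
      ‖𝓕 (fun s => ((acut d δ N s : ℝ) : ℂ)) x‖ ≤
    2 * N * (d τ / δ) + 2 * (N + |τ|) * (|τ| / N) := by
  refine le_trans ?_ (acut_int_lip h hδ hN τ)
  have hc : Continuous (fun s => ((acut d δ N s : ℝ) : ℂ)) :=
    Complex.continuous_ofReal.comp (acut_cont h hδ hN)
  have hcs : HasCompactSupport (fun s => ((acut d δ N s : ℝ) : ℂ)) :=
    (acut_supp h hδ hN).comp_left (g := fun x : ℝ => (x : ℂ)) (by simp)
  have hi := hc.integrable_of_hasCompactSupport (μ := volume) hcs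
  have hi2 := hi.comp_add_right τ
  have key : (Complex.exp (Complex.I * ((2 * Real.pi * x * τ : ℝ) : ℂ)) - 1) *
      𝓕 (fun s => ((acut d δ N s : ℝ) : ℂ)) x =
      𝓕 (fun s => ((acut d δ N (s + τ) - acut d δ N s : ℝ) : ℂ)) x := by
    have e1 : ∀ s, ((acut d δ N (s + τ) - acut d δ N s : ℝ) : ℂ) =
       ((acut d δ N (s + τ) : ℝ) : ℂ) - ((acut d δ N s : ℝ) : ℂ) := by intro s; push_cast; rfl
    simp_rw [e1]
    rw [Real.fourier_real_eq_integral_exp_smul, Real.fourier_real_eq_integral_exp_smul]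
    simp only [smul_eq_mul, mul_sub]
    have hb : ∀ f : ℝ → ℂ, Integrable f → Integrable (fun v : ℝ => Complex.exp (((-2 * Real.pi * v * x : ℝ) : ℂ) * Complex.I) * f v) := by
      intro f hf
      refine hf.bdd_mul (c := 1) (by fun_prop) (Eventually.of_forall fun v => ?_)
      rw [Complex.norm_exp_ofReal_mul_I]
    rw [integral_sub (hb _ hi2) (hb _ hi), sub_mul, one_mul]
    congr 1
    rw [← integral_const_mul,
      ← integral_add_right_eq_self (fun v => Complex.exp (Complex.I * ((2 * Real.pi * x * τ : ℝ) : ℂ)) * _) τ]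
    congr 1; ext v
    rw [← mul_assoc, ← Complex.exp_add]
    congr 2
    push_cast
    ring
  rw [← norm_mul, key]
  refine (VectorFourier.norm_fourierIntegral_le_integral_norm _ _ _ _ _).trans (le_of_eq ?_)
  congr 1; ext s
  rw [Complex.norm_real, Real.norm_eq_abs]

/-- real autocorrelation -/
lemma acut_acorr {d : ℝ → ℝ} (h : PN d) {δ N : ℝ} (hδ : 0 < δ) (hN : 0 < N) (t : ℝ) : acorr (fun s => ((acut d δ N s : ℝ) : ℂ)) t =
    ((∫ s, acut d δ N s * acut d δ N (s - t) : ℝ) : ℂ) := by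
  rw [acorr, ← integral_complex_ofReal]
  congr 1; ext s
  simp

lemma racorr_nonneg {d : ℝ → ℝ} (h : PN d) {δ N : ℝ} (hδ : 0 < δ) (hN : 0 < N) (t : ℝ) : 0 ≤ ∫ s, acut d δ N s * acut d δ N (s - t) :=
  integral_nonneg fun s => mul_nonneg (acut_nonneg h hδ hN _) (acut_nonneg h hδ hN _)

lemma racorr_ne {d : ℝ → ℝ} (h : PN d) {δ N : ℝ} (hδ : 0 < δ) (hN : 0 < N) (t : ℝ) (ht : (∫ s, acut d δ N s * acut d δ N (s - t)) ≠ 0) : d t < 2 * δ := by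
  by_contra hc
  push Not at hc
  apply ht
  have : ∀ s, acut d δ N s * acut d δ N (s - t) = 0 := by
    intro s
    by_contra h0
    have h1 := acut_ne h hδ hN _ (left_ne_zero_of_mul h0)
    have h2 := acut_ne h hδ hN _ (right_ne_zero_of_mul h0)
    have h3 := h.add s (-(s - t))
    rw [h.neg] at h3
    simp only [neg_sub, add_sub_cancel] at h3
    linarith
  simp [this]

lemma racorr_big {d : ℝ → ℝ} (h : PN d) {δ N : ℝ} (hδ : 0 < δ) (hN : 0 < N) (E : Set ℝ) (hE : MeasurableSet E) (hE1 : E ⊆ Set.Icc 0 (N / 2))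
    (hE2 : ∀ t ∈ E, d t ≤ δ / 4) (t : ℝ) (ht : t ∈ E) :
    volume.real E / 16 ≤ ∫ s, acut d δ N s * acut d δ N (s - t) := by
  have hfin : volume E ≠ ⊤ := ((measure_mono hE1).trans_lt (by simp)).ne
  have hc := acut_cont h hδ hN
  have hI : Integrable (fun s => acut d δ N s * acut d δ N (s - t)) :=
    Continuous.integrable_of_hasCompactSupport (by fun_prop)
      ((acut_supp h hδ hN).mul_right)
  calc volume.real E / 16 = ∫ s, E.indicator (fun _ => (1 / 16 : ℝ)) s := by
        rw [integral_indicator hE]; simp; ring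
    _ ≤ _ := by
      refine integral_mono ((integrable_indicator_iff hE).2 (by simp [hfin.lt_top])) hI (fun s => ?_)
      by_cases hs : s ∈ E
      · rw [Set.indicator_of_mem hs]
        have a1 := acut_big h hδ hN s (by rw [abs_of_nonneg (hE1 hs).1]; exact (hE1 hs).2)
          (by have := hE2 s hs; linarith)
        have a2 := acut_big h hδ hN (s - t) (by
            have := hE1 hs; have := hE1 ht
            rw [abs_le]; constructor <;> linarith [(hE1 hs).1, (hE1 hs).2, (hE1 ht).1, (hE1 ht).2]) (by
            have h3 := h.add s (-t)
            rw [h.neg] at h3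
            have := hE2 s hs; have := hE2 t ht
            rw [← sub_eq_add_neg] at h3; linarith)
        calc (1 / 16 : ℝ) = 1 / 4 * (1 / 4) := by norm_num
          _ ≤ _ := mul_le_mul a1 a2 (by norm_num) (acut_nonneg h hδ hN _)
      · rw [Set.indicator_of_notMem hs]
        exact mul_nonneg (acut_nonneg h hδ hN _) (acut_nonneg h hδ hN _)
end

end Duality


section Duality
open scoped FourierTransform

lemma vol_low (d1 d2 : ℝ → ℝ) (h1 : PN d1) (h2 : PN d2)
    (hrd : ∀ ε > 0, RelDense {τ | d1 τ < ε ∧ d2 τ < ε}) (δ : ℝ) (hδ : 0 < δ) :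
    ∃ b > 0, ∃ ω > 0, ∀ n : ℕ,
      n * ω ≤ volume.real ({t | d1 t ≤ δ ∧ d2 t ≤ δ} ∩ Set.Ico 0 (n * b)) := by
  obtain ⟨a, ha, hrel⟩ := hrd (δ / 2) (by positivity)
  have e1 : ∀ᶠ t in 𝓝 (0:ℝ), d1 t < δ / 2 ∧ d2 t < δ / 2 :=
    (h1.cont.eventually_lt_const (by positivity)).and (h2.cont.eventually_lt_const (by positivity))
  obtain ⟨r, hr, hball⟩ := Metric.eventually_nhds_iff.1 e1
  set ω := min r 1 with hω
  have hω0 : 0 < ω := lt_min hr one_pos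
  refine ⟨a + 1, by positivity, ω, hω0, fun n => ?_⟩
  set E := {t | d1 t ≤ δ ∧ d2 t ≤ δ} with hE
  have hEm : MeasurableSet E :=
    ((isClosed_le h1.continuous continuous_const).inter (isClosed_le h2.continuous continuous_const)).measurableSet
  induction n with
  | zero => simp
  | succ n ih =>
    obtain ⟨σ, hσ, hσ2⟩ := hrel (n * (a + 1))
    have hsub : (E ∩ Set.Ico 0 (n * (a + 1))) ∪ Set.Ico σ (σ + ω) ⊆ E ∩ Set.Ico 0 ((n + 1 : ℕ) * (a + 1)) := by
      push_cast
      have hw1 : ω ≤ 1 := min_le_right _ _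
      rintro t (⟨ht, ht2⟩ | ht)
      · refine ⟨ht, ht2.1, ht2.2.trans_le ?_⟩
        nlinarith
      · refine ⟨?_, ?_, ?_⟩
        · have := hball (y := t - σ) (by
            rw [Real.dist_eq, sub_zero, abs_of_nonneg (by linarith [ht.1])]
            have := min_le_left r 1
            linarith [ht.2])
          have q1 := h1.add σ (t - σ)
          have q2 := h2.add σ (t - σ)
          simp only [add_sub_cancel] at q1 q2
          have := hσ2.1; have := hσ2.2
          constructor <;> linarith
        · have : 0 ≤ n * (a + 1) := by positivity
          linarith [ht.1, hσ.1]
        · linarith [ht.2, hσ.2]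
    have hdis : Disjoint (E ∩ Set.Ico 0 (n * (a + 1))) (Set.Ico σ (σ + ω)) := by
      rw [Set.disjoint_left]
      rintro t ⟨-, ht⟩ ht2
      linarith [ht.2, ht2.1, hσ.1]
    have hfin : volume (E ∩ Set.Ico 0 ((n + 1 : ℕ) * (a + 1))) ≠ ⊤ :=
      ((measure_mono Set.inter_subset_right).trans_lt measure_Ico_lt_top).ne
    have hfin2 : volume (E ∩ Set.Ico 0 (n * (a + 1))) ≠ ⊤ :=
      ((measure_mono Set.inter_subset_right).trans_lt measure_Ico_lt_top).ne
    calc ((n + 1 : ℕ) : ℝ) * ω = n * ω + ω := by push_cast; ring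
      _ ≤ volume.real (E ∩ Set.Ico 0 (n * (a + 1))) + volume.real (Set.Ico σ (σ + ω)) := by
        gcongr
        rw [Real.volume_real_Ico_of_le (by linarith)]
        linarith
      _ = volume.real ((E ∩ Set.Ico 0 (n * (a + 1))) ∪ Set.Ico σ (σ + ω)) := by
        rw [measureReal_union hdis measurableSet_Ico hfin2 (by simp)]
      _ ≤ _ := measureReal_mono hsub hfin

/-- existence of a common large frequency -/
lemma freq_exists (d1 d2 : ℝ → ℝ) (h1 : PN d1) (h2 : PN d2) (δ N v l : ℝ) (hδ : 0 < δ) (hN : 0 < N)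
    (hv : 0 < v)
    (hcos : ∀ t, d1 t < 2 * δ → d2 t < 2 * δ → 1 / 2 ≤ Real.cos (2 * Real.pi * l * t))
    (hvol : v ≤ volume.real ({t | d1 t ≤ δ / 4 ∧ d2 t ≤ δ / 4} ∩ Set.Ico 0 (N / 2))) :
    ∃ x, v ^ 3 / (4096 * N) ≤ ‖𝓕 (fun s => ((acut d1 δ N s : ℝ) : ℂ)) x‖ ^ 2 ∧
      v ^ 3 / (4096 * N) ≤ ‖𝓕 (fun s => ((acut d2 δ N s : ℝ) : ℂ)) (l - x)‖ ^ 2 := by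
  set E := {t | d1 t ≤ δ / 4 ∧ d2 t ≤ δ / 4} ∩ Set.Ico 0 (N / 2) with hE
  have hEm : MeasurableSet E :=
    ((isClosed_le h1.continuous continuous_const).inter
      (isClosed_le h2.continuous continuous_const)).measurableSet.inter measurableSet_Ico
  have hE1 : E ⊆ Set.Icc 0 (N / 2) := fun t ht => ⟨ht.2.1, ht.2.2.le⟩
  set a : ℝ → ℂ := fun s => ((acut d1 δ N s : ℝ) : ℂ) with ha
  set b : ℝ → ℂ := fun s => ((acut d2 δ N s : ℝ) : ℂ) with hb
  set A : ℝ → ℝ := fun t => ∫ s, acut d1 δ N s * acut d1 δ N (s - t) with hA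
  set B : ℝ → ℝ := fun t => ∫ s, acut d2 δ N s * acut d2 δ N (s - t) with hB
  have hac : Continuous a := Complex.continuous_ofReal.comp (acut_cont h1 hδ hN)
  have hbc : Continuous b := Complex.continuous_ofReal.comp (acut_cont h2 hδ hN)
  have has : HasCompactSupport a :=
    (acut_supp h1 hδ hN).comp_left (g := fun x : ℝ => (x : ℂ)) (by simp)
  have hbs : HasCompactSupport b :=
    (acut_supp h2 hδ hN).comp_left (g := fun x : ℝ => (x : ℂ)) (by simp)
  have hAa : ∀ t, acorr a t = ((A t : ℝ) : ℂ) := fun t => acut_acorr h1 hδ hN t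
  have hBb : ∀ t, acorr b t = ((B t : ℝ) : ℂ) := fun t => acut_acorr h2 hδ hN t
  have hAc : Continuous A := by
    have : A = fun t => (acorr a t).re := by ext t; rw [hAa, Complex.ofReal_re]
    rw [this]; exact Complex.continuous_re.comp (acorr_cont a hac has).1
  have hBc : Continuous B := by
    have : B = fun t => (acorr b t).re := by ext t; rw [hBb, Complex.ofReal_re]
    rw [this]; exact Complex.continuous_re.comp (acorr_cont b hbc hbs).1
  have hAs : HasCompactSupport A := by
    have : A = fun t => (acorr a t).re := by ext t; rw [hAa, Complex.ofReal_re]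
    rw [this]; exact (acorr_cont a hac has).2.comp_left (g := Complex.re) (by simp)
  have hABi : Integrable (fun t => A t * B t) :=
    (hAc.mul hBc).integrable_of_hasCompactSupport hAs.mul_right
  have hABci : Integrable (fun t => A t * B t * Real.cos (2 * Real.pi * l * t)) := by
    refine ((hAc.mul hBc).mul (by fun_prop)).integrable_of_hasCompactSupport hAs.mul_right.mul_right
  have hpar := parseval_acorr a b hac has hbc hbs l
  have hpar2 : (∫ x, ‖𝓕 a x‖ ^ 2 * ‖𝓕 b (l - x)‖ ^ 2) = ∫ t, A t * B t * Real.cos (2 * Real.pi * l * t) := by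
    have hc : Continuous fun t => acorr a t * acorr b t * Complex.exp (((-2 * Real.pi * l * t : ℝ) : ℂ) * Complex.I) := by
      have q1 := (acorr_cont a hac has).1
      have q2 := (acorr_cont b hbc hbs).1
      fun_prop
    have hi : Integrable fun t => acorr a t * acorr b t * Complex.exp (((-2 * Real.pi * l * t : ℝ) : ℂ) * Complex.I) :=
      hc.integrable_of_hasCompactSupport ((acorr_cont a hac has).2.mul_right.mul_right)
    have := congrArg Complex.re hpar
    rw [Complex.ofReal_re] at this
    rw [this]
    have h3 := integral_re hi
    simp only [RCLike.re_eq_complex_re] at h3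
    rw [← h3]
    congr 1; ext t
    rw [hAa, hBb, ← Complex.ofReal_mul, Complex.re_ofReal_mul, Complex.exp_ofReal_mul_I_re]
    congr 1
    rw [← Real.cos_neg]; congr 1; ring
  have hlow : v ^ 3 / 512 ≤ ∫ x, ‖𝓕 a x‖ ^ 2 * ‖𝓕 b (l - x)‖ ^ 2 := by
    rw [hpar2]
    have hfin : volume E ≠ ⊤ := ((measure_mono hE1).trans_lt (by simp)).ne
    have hA0 : ∀ t, 0 ≤ A t := racorr_nonneg h1 hδ hN
    have hB0 : ∀ t, 0 ≤ B t := racorr_nonneg h2 hδ hN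
    calc v ^ 3 / 512 = v * (v / 16 * (v / 16) * (1 / 2)) := by ring
      _ ≤ volume.real E * (v / 16 * (v / 16) * (1 / 2)) := by gcongr
      _ = ∫ t, E.indicator (fun _ => (v / 16 * (v / 16) * (1 / 2))) t := by
        rw [integral_indicator hEm]; simp
      _ ≤ _ := by
        refine integral_mono ((integrable_indicator_iff hEm).2 (integrableOn_const hfin)) hABci (fun t => ?_)
        by_cases hz : A t * B t = 0
        · have : t ∉ E := by
            intro ht
            have q1 := racorr_big h1 hδ hN E hEm hE1 (fun t ht => ht.1.1) t ht
            have q2 := racorr_big h2 hδ hN E hEm hE1 (fun t ht => ht.1.2) t ht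
            have : 0 < volume.real E / 16 := by linarith
            have : 0 < A t * B t := mul_pos (this.trans_le q1) (this.trans_le q2)
            exact this.ne' hz
          rw [Set.indicator_of_notMem this]
          simp only [hz, zero_mul, le_refl]
        · have c1 := hcos t (racorr_ne h1 hδ hN t (left_ne_zero_of_mul hz))
            (racorr_ne h2 hδ hN t (right_ne_zero_of_mul hz))
          by_cases ht : t ∈ E
          · rw [Set.indicator_of_mem ht]
            have q1 := racorr_big h1 hδ hN E hEm hE1 (fun t ht => ht.1.1) t ht
            have q2 := racorr_big h2 hδ hN E hEm hE1 (fun t ht => ht.1.2) t ht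
            have q1' : v / 16 ≤ A t := le_trans (by gcongr) q1
            have q2' : v / 16 ≤ B t := le_trans (by gcongr) q2
            have := mul_le_mul q1' q2' (by positivity) (hA0 t)
            exact mul_le_mul this c1 (by norm_num) (mul_nonneg (hA0 t) (hB0 t))
          · rw [Set.indicator_of_notMem ht]
            exact mul_nonneg (mul_nonneg (hA0 t) (hB0 t)) (by linarith)
  by_contra hcon
  push Not at hcon
  set κ := v ^ 3 / (4096 * N) with hκ
  have hκ0 : 0 < κ := by positivity
  obtain ⟨iP, eP⟩ := acorr_integrable a hac has
  obtain ⟨iQ, eQ⟩ := acorr_integrable b hbc hbs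
  have iQ' := iQ.comp_sub_left l
  have hup : ∫ x, ‖𝓕 a x‖ ^ 2 * ‖𝓕 b (l - x)‖ ^ 2 ≤ ∫ x, κ * (‖𝓕 a x‖ ^ 2 + ‖𝓕 b (l - x)‖ ^ 2) := by
    refine integral_mono_of_nonneg (Eventually.of_forall fun x => by positivity)
      ((iP.add iQ').const_mul κ) (Eventually.of_forall fun x => ?_)
    show ‖𝓕 a x‖ ^ 2 * ‖𝓕 b (l - x)‖ ^ 2 ≤ κ * (‖𝓕 a x‖ ^ 2 + ‖𝓕 b (l - x)‖ ^ 2)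
    by_cases hx : κ ≤ ‖𝓕 a x‖ ^ 2
    · have := hcon x hx
      nlinarith [sq_nonneg ‖𝓕 a x‖, sq_nonneg ‖𝓕 b (l - x)‖]
    · push Not at hx
      nlinarith [sq_nonneg ‖𝓕 a x‖, sq_nonneg ‖𝓕 b (l - x)‖]
  rw [integral_const_mul, integral_add iP iQ', integral_sub_left_eq_self (fun x => ‖𝓕 b x‖ ^ 2) volume l] at hup
  have s1 := acut_sq h1 hδ hN
  have s2 := acut_sq h2 hδ hN
  have : κ * ((∫ x, ‖𝓕 a x‖ ^ 2) + ∫ x, ‖𝓕 b x‖ ^ 2) ≤ κ * (2 * N + 2 * N) := by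
    gcongr
    · exact eP.trans s1
    · exact eQ.trans s2
  have e3 : κ * (2 * N + 2 * N) = v ^ 3 / 1024 := by
    rw [hκ]; field_simp; ring
  have : 0 < v ^ 3 := by positivity
  linarith

end Duality


section Duality
open scoped FourierTransform

lemma bdd_freq (d : ℝ → ℝ) (h : PN d) (C : ℝ) (N : ℕ → ℝ) (hN : Tendsto N atTop atTop) (x : ℕ → ℝ)
    (hC : 0 < C)
    (hx : ∀ᶠ n in atTop, ∀ τ, ‖Complex.exp (Complex.I * ((2 * Real.pi * x n * τ : ℝ) : ℂ)) - 1‖ ≤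
      C * d τ + C * ((N n + |τ|) * |τ| / (N n) ^ 2)) :
    ∃ R : ℝ, ∀ᶠ n in atTop, x n ∈ Set.Icc (-R) R := by
  obtain ⟨r, hr, hball⟩ := Metric.eventually_nhds_iff.1 (h.cont.eventually_lt_const (u := 1 / (2 * C)) (by positivity))
  set ω := min (r / 2) 1
  have hω0 : 0 < ω := lt_min (by positivity) one_pos
  refine ⟨1 / (2 * ω), ?_⟩
  filter_upwards [hx, hN.eventually_ge_atTop (max 1 (4 * C + 1))] with n hn hbig
  by_contra hc
  have hbig1 : 1 ≤ N n := (le_max_left _ _).trans hbig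
  have hbig2 : 4 * C + 1 ≤ N n := (le_max_right _ _).trans hbig
  have hxa : 1 / (2 * ω) < |x n| := by
    by_contra h'
    push Not at h'
    exact hc (abs_le.1 h')
  have hx0 : x n ≠ 0 := by
    intro h0; rw [h0, abs_zero] at hxa
    have : 0 < 1 / (2 * ω) := by positivity
    linarith
  have hτ : |1 / (2 * x n)| < ω := by
    rw [abs_div, abs_mul, abs_one, abs_two, div_lt_iff₀ (by positivity)]
    rw [div_lt_iff₀ (by positivity)] at hxa
    linarith
  have := hn (1 / (2 * x n))
  have e1 : (2 * Real.pi * x n * (1 / (2 * x n)) : ℝ) = Real.pi := by field_simp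
  rw [e1, mul_comm Complex.I, Complex.exp_pi_mul_I] at this
  have e2 : ‖(-1 - 1 : ℂ)‖ = 2 := by norm_num
  rw [e2] at this
  have q1 : d (1 / (2 * x n)) < 1 / (2 * C) := hball (by
    rw [Real.dist_eq, sub_zero]
    exact hτ.trans_le ((min_le_left _ _).trans (by linarith)))
  have q2 : C * d (1 / (2 * x n)) ≤ 1 / 2 := by
    calc C * d (1 / (2 * x n)) ≤ C * (1 / (2 * C)) := by gcongr
      _ = 1 / 2 := by field_simp
  have hτ1 : |1 / (2 * x n)| ≤ 1 := hτ.le.trans (min_le_right _ _)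
  set τ := 1 / (2 * x n)
  have q3 : (N n + |τ|) * |τ| / (N n) ^ 2 ≤ 2 / N n := by
    rw [div_le_div_iff₀ (by positivity) (by positivity)]
    have : (N n + |τ|) * |τ| ≤ 2 * N n := by nlinarith [abs_nonneg τ]
    nlinarith
  have q4 : C * ((N n + |τ|) * |τ| / (N n) ^ 2) ≤ 1 / 2 := by
    calc C * ((N n + |τ|) * |τ| / (N n) ^ 2) ≤ C * (2 / N n) := by gcongr
      _ ≤ 1 / 2 := by
        rw [← mul_div_assoc, div_le_div_iff₀ (by positivity) (by positivity)]
        linarith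
  linarith

lemma lim_freq (d : ℝ → ℝ) (C : ℝ) (N : ℕ → ℝ) (hN : Tendsto N atTop atTop) (x : ℕ → ℝ) (y : ℝ)
    (hxy : Tendsto x atTop (𝓝 y))
    (hx : ∀ᶠ n in atTop, ∀ τ, ‖Complex.exp (Complex.I * ((2 * Real.pi * x n * τ : ℝ) : ℂ)) - 1‖ ≤
      C * d τ + C * ((N n + |τ|) * |τ| / (N n) ^ 2)) (τ : ℝ) :
    ‖Complex.exp (Complex.I * ((2 * Real.pi * y * τ : ℝ) : ℂ)) - 1‖ ≤ C * d τ := by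
  have h1 : Tendsto (fun n => ‖Complex.exp (Complex.I * ((2 * Real.pi * x n * τ : ℝ) : ℂ)) - 1‖) atTop
      (𝓝 ‖Complex.exp (Complex.I * ((2 * Real.pi * y * τ : ℝ) : ℂ)) - 1‖) := by
    have hc : Continuous fun y : ℝ => ‖Complex.exp (Complex.I * ((2 * Real.pi * y * τ : ℝ) : ℂ)) - 1‖ := by
      fun_prop
    exact (hc.tendsto y).comp hxy
  have h2 : Tendsto (fun n => C * d τ + C * ((N n + |τ|) * |τ| / (N n) ^ 2)) atTop (𝓝 (C * d τ + C * ((1 + |τ| * 0) * |τ| * 0))) := by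
    have hi : Tendsto (fun n => (N n)⁻¹) atTop (𝓝 0) := tendsto_inv_atTop_zero.comp hN
    have h3 : Tendsto (fun n => C * d τ + C * ((1 + |τ| * (N n)⁻¹) * |τ| * (N n)⁻¹)) atTop (𝓝 (C * d τ + C * ((1 + |τ| * 0) * |τ| * 0))) :=
      ((((hi.const_mul _).const_add _).mul_const _).mul hi |>.const_mul _).const_add _
    refine h3.congr' ?_
    filter_upwards [hN.eventually_gt_atTop 0] with n hn
    field_simp
  have := le_of_tendsto_of_tendsto h1 h2 (hx.mono fun n hn => hn τ)
  simpa using this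

theorem duality (d1 d2 : ℝ → ℝ) (h1 : PN d1) (h2 : PN d2)
    (hrd : ∀ ε > 0, RelDense {τ | d1 τ < ε ∧ d2 τ < ε}) (lam : ℝ)
    (hlam : ∀ ε > 0, ∃ δ > 0, ∀ τ, d1 τ < δ → d2 τ < δ →
      ‖Complex.exp (Complex.I * ((lam * τ : ℝ) : ℂ)) - 1‖ < ε) :
    ∃ μ C : ℝ, 0 < C ∧ ∀ τ, ‖Complex.exp (Complex.I * ((μ * τ : ℝ) : ℂ)) - 1‖ ≤ C * d1 τ ∧
      ‖Complex.exp (Complex.I * (((lam - μ) * τ : ℝ) : ℂ)) - 1‖ ≤ C * d2 τ := by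
  obtain ⟨δ0, hδ0, hl⟩ := hlam (1 / 2) (by norm_num)
  set δ := δ0 / 2 with hδd
  have hδ : 0 < δ := by positivity
  set l := lam / (2 * Real.pi) with hldef
  have hcos : ∀ t, d1 t < 2 * δ → d2 t < 2 * δ → 1 / 2 ≤ Real.cos (2 * Real.pi * l * t) := by
    intro t t1 t2
    have := hl t (by linarith) (by linarith)
    have e : 2 * Real.pi * l * t = lam * t := by rw [hldef]; field_simp
    rw [e]
    have h3 := (Complex.abs_re_le_norm _).trans_lt this
    rw [Complex.sub_re, mul_comm Complex.I, Complex.exp_ofReal_mul_I_re, Complex.one_re, abs_lt] at h3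
    linarith [h3.1]
  obtain ⟨b, hb, ω, hω, hvol⟩ := vol_low d1 d2 h1 h2 hrd (δ / 4) (by positivity)
  set N : ℕ → ℝ := fun n => 2 * ((n + 1 : ℕ) * b) with hNdef
  have hN0 : ∀ n, 0 < N n := fun n => by positivity
  have hNt : Tendsto N atTop atTop := by
    have : Tendsto (fun n : ℕ => (((n + 1 : ℕ) : ℝ))) atTop atTop :=
      tendsto_natCast_atTop_atTop.comp (tendsto_add_atTop_nat 1)
    exact (this.atTop_mul_const hb).const_mul_atTop (by norm_num)
  have hex : ∀ n, ∃ x, ((n + 1 : ℕ) * ω) ^ 3 / (4096 * N n) ≤ ‖𝓕 (fun s => ((acut d1 δ (N n) s : ℝ) : ℂ)) x‖ ^ 2 ∧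
      ((n + 1 : ℕ) * ω) ^ 3 / (4096 * N n) ≤ ‖𝓕 (fun s => ((acut d2 δ (N n) s : ℝ) : ℂ)) (l - x)‖ ^ 2 := by
    intro n
    apply freq_exists d1 d2 h1 h2 δ (N n) _ l hδ (hN0 n) (by positivity) hcos
    have : N n / 2 = (n + 1 : ℕ) * b := by simp [hNdef]
    rw [this]
    exact hvol (n + 1)
  choose x hx1 hx2 using hex
  set c := Real.sqrt (ω ^ 3 / (32768 * b ^ 3)) with hc
  have hc0 : 0 < c := Real.sqrt_pos.2 (by positivity)
  have hcN : ∀ n, ((n + 1 : ℕ) * ω) ^ 3 / (4096 * N n) = (c * N n) ^ 2 := by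
    intro n
    rw [mul_pow c, hc, Real.sq_sqrt (by positivity)]
    simp only [hNdef]
    field_simp
    ring
  have hb1 : ∀ n, c * N n ≤ ‖𝓕 (fun s => ((acut d1 δ (N n) s : ℝ) : ℂ)) (x n)‖ := by
    intro n
    have := hx1 n
    rw [hcN] at this
    exact (pow_le_pow_iff_left₀ (by have := hN0 n; positivity) (norm_nonneg _) two_ne_zero).1 this
  have hb2 : ∀ n, c * N n ≤ ‖𝓕 (fun s => ((acut d2 δ (N n) s : ℝ) : ℂ)) (l - x n)‖ := by
    intro n
    have := hx2 n
    rw [hcN] at this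
    exact (pow_le_pow_iff_left₀ (by have := hN0 n; positivity) (norm_nonneg _) two_ne_zero).1 this
  set C := 2 / c * max (1 / δ) 1 with hC
  have hCp : 0 < C := by positivity
  have gen : ∀ (d : ℝ → ℝ) (h : PN d) (n : ℕ) (z τ : ℝ),
      c * N n ≤ ‖𝓕 (fun s => ((acut d δ (N n) s : ℝ) : ℂ)) z‖ →
      ‖Complex.exp (Complex.I * ((2 * Real.pi * z * τ : ℝ) : ℂ)) - 1‖ ≤
      C * d τ + C * ((N n + |τ|) * |τ| / (N n) ^ 2) := by
    intro d h n z τ hz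
    have hn := hN0 n
    have t1 := acut_fourier_transl h hδ hn z τ
    set M := ‖Complex.exp (Complex.I * ((2 * Real.pi * z * τ : ℝ) : ℂ)) - 1‖
    have t2 : M * (c * N n) ≤ 2 * N n * (d τ / δ) + 2 * (N n + |τ|) * (|τ| / N n) :=
      (mul_le_mul_of_nonneg_left hz (norm_nonneg _)).trans t1
    have t3 : M ≤ (2 / c) * (1 / δ) * d τ + (2 / c) * 1 * ((N n + |τ|) * |τ| / (N n) ^ 2) := by
      rw [← le_div_iff₀ (by positivity)] at t2
      refine t2.trans (le_of_eq ?_)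
      field_simp
    refine t3.trans (add_le_add ?_ ?_)
    · have := h.nonneg τ
      rw [hC]
      gcongr
      exact le_max_left _ _
    · rw [hC]
      gcongr
      exact le_max_right _ _
  obtain ⟨R, hR⟩ := bdd_freq d1 h1 C N hNt x hCp (Eventually.of_forall fun n τ => gen d1 h1 n _ τ (hb1 n))
  obtain ⟨y, -, φ, hφ, hy⟩ := tendsto_subseq_of_frequently_bounded (Metric.isBounded_Icc (-R) R) hR.frequently
  have r1 := lim_freq d1 C (N ∘ φ) (hNt.comp hφ.tendsto_atTop) (x ∘ φ) y hy
    (Eventually.of_forall fun n τ => gen d1 h1 _ _ τ (hb1 _))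
  have r2 := lim_freq d2 C (N ∘ φ) (hNt.comp hφ.tendsto_atTop) (fun n => l - (x ∘ φ) n) (l - y)
    (hy.const_sub l)
    (Eventually.of_forall fun n τ => gen d2 h2 _ _ τ (hb2 _))
  refine ⟨2 * Real.pi * y, C, hCp, fun τ => ⟨r1 τ, ?_⟩⟩
  have e : (lam - 2 * Real.pi * y) * τ = 2 * Real.pi * (l - y) * τ := by
    rw [hldef]; field_simp
  rw [e]
  exact r2 τ

end Duality


section Small

/-- `T` has uniformly upper density at most `c` at scales `≥ l`. -/
def Sm (l : ℝ) (T : Set ℝ) (c : ℝ) : Prop :=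
  0 < l ∧ ∀ L ≥ l, ∀ ξ : ℝ, volume (T ∩ Set.Icc ξ (ξ + L)) ≤ ENNReal.ofReal (c * L)

lemma Sm.mono {l l' c c' : ℝ} {T T' : Set ℝ} (h : Sm l T c) (hl : l ≤ l') (hT : T' ⊆ T) (hc : c ≤ c') :
    Sm l' T' c' := by
  refine ⟨h.1.trans_le hl, fun L hL ξ => ?_⟩
  have hL0 : 0 ≤ L := (h.1.le.trans hl).trans hL
  exact (measure_mono (Set.inter_subset_inter_left _ hT)).trans
    ((h.2 L (hl.trans hL) ξ).trans (ENNReal.ofReal_le_ofReal (by gcongr)))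

lemma Sm.union {l l' c c' : ℝ} {T T' : Set ℝ} (h : Sm l T c) (h' : Sm l' T' c') (hc : 0 ≤ c) (hc' : 0 ≤ c') :
    Sm (max l l') (T ∪ T') (c + c') := by
  refine ⟨lt_max_of_lt_left h.1, fun L hL ξ => ?_⟩
  have hL0 : 0 ≤ L := h.1.le.trans ((le_max_left _ _).trans hL)
  rw [Set.union_inter_distrib_right, add_mul, ENNReal.ofReal_add (by positivity) (by positivity)]
  exact (measure_union_le _ _).trans (add_le_add (h.2 L ((le_max_left _ _).trans hL) ξ)
    (h'.2 L ((le_max_right _ _).trans hL) ξ))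

lemma vol_shift (T : Set ℝ) (τ ξ L : ℝ) : volume ({t | t + τ ∈ T} ∩ Set.Icc ξ (ξ + L)) =
    volume (T ∩ Set.Icc (ξ + τ) (ξ + τ + L)) := by
  rw [← measure_preimage_add_right volume τ (T ∩ Set.Icc (ξ + τ) (ξ + τ + L))]
  congr 1
  ext t
  simp only [Set.mem_inter_iff, Set.mem_ofPred_eq, Set.mem_Icc, Set.mem_preimage]
  constructor <;> rintro ⟨h1, h2, h3⟩ <;> refine ⟨h1, ?_, ?_⟩ <;> linarith

lemma Sm.shift {l c : ℝ} {T : Set ℝ} (h : Sm l T c) (τ : ℝ) : Sm l {t | t + τ ∈ T} c := by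
  refine ⟨h.1, fun L hL ξ => ?_⟩
  rw [vol_shift]
  exact h.2 L hL _

lemma doubling (ν : Measure ℝ) (l c : ℝ) (hl : 0 < l) (hc : 0 ≤ c)
    (h : ∀ ξ, ν (Set.Icc ξ (ξ + l)) ≤ ENNReal.ofReal (c * l)) (L : ℝ) (hL : l ≤ L) (ξ : ℝ) :
    ν (Set.Icc ξ (ξ + L)) ≤ ENNReal.ofReal (2 * c * L) := by
  set n := ⌈L / l⌉₊ with hn
  have h1 : L ≤ n * l := by
    have := Nat.le_ceil (L / l)
    rwa [div_le_iff₀ hl] at this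
  have h2 : n * l ≤ 2 * L := by
    have := (Nat.ceil_lt_add_one (a := L / l) (div_nonneg (hl.le.trans hL) hl.le)).le
    calc n * l ≤ (L / l + 1) * l := by gcongr
      _ = L + l := by field_simp
      _ ≤ 2 * L := by linarith
  have hsub : Set.Icc ξ (ξ + L) ⊆ ⋃ k ∈ Finset.range n, Set.Icc (ξ + k * l) (ξ + k * l + l) := by
    intro t ht
    have hn0 : 0 < n := Nat.ceil_pos.2 (div_pos (hl.trans_le hL) hl)
    by_cases hlast : t = ξ + n * l
    · refine Set.mem_biUnion (x := n - 1) (by simp; omega) ?_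
      have : ((n - 1 : ℕ) : ℝ) = n - 1 := by rw [Nat.cast_sub hn0]; simp
      rw [this, hlast]
      constructor <;> nlinarith
    · have ht0 : 0 ≤ (t - ξ) / l := div_nonneg (by linarith [ht.1]) hl.le
      have hlt : (t - ξ) / l < n := by
        rw [div_lt_iff₀ hl]
        have : t - ξ ≤ n * l := by linarith [ht.2]
        refine lt_of_le_of_ne this fun h => hlast (by linarith)
      refine Set.mem_biUnion (x := ⌊(t - ξ) / l⌋₊) (by simpa using (Nat.floor_lt ht0).2 hlt) ?_
      have a1 := Nat.floor_le ht0
      have a2 := (Nat.lt_floor_add_one ((t - ξ) / l)).le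
      rw [le_div_iff₀ hl] at a1
      rw [div_le_iff₀ hl] at a2
      constructor <;> linarith
  calc ν (Set.Icc ξ (ξ + L)) ≤ ∑ k ∈ Finset.range n, ν (Set.Icc (ξ + k * l) (ξ + k * l + l)) :=
        (measure_mono hsub).trans (measure_biUnion_finset_le _ _)
    _ ≤ ∑ k ∈ Finset.range n, ENNReal.ofReal (c * l) := Finset.sum_le_sum fun k _ => h _
    _ = ENNReal.ofReal (n * (c * l)) := by
        rw [Finset.sum_const, Finset.card_range, nsmul_eq_mul, ENNReal.ofReal_mul (p := (n : ℝ)) (by positivity),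
          ENNReal.ofReal_natCast]
    _ ≤ _ := ENNReal.ofReal_le_ofReal (by nlinarith)

lemma Sm.of_window {l c : ℝ} {T : Set ℝ} (hl : 0 < l) (hc : 0 ≤ c)
    (h : ∀ ξ, volume (T ∩ Set.Icc ξ (ξ + l)) ≤ ENNReal.ofReal (c * l)) : Sm l T (2 * c) := by
  refine ⟨hl, fun L hL ξ => ?_⟩
  have := doubling (volume.restrict T) l c hl hc (fun ξ => by
    rw [Measure.restrict_apply measurableSet_Icc, Set.inter_comm]; exact h ξ) L hL ξ
  rwa [Measure.restrict_apply measurableSet_Icc, Set.inter_comm] at this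

variable {α β : Type*} [PseudoEMetricSpace α] [PseudoEMetricSpace β]

def bad (y : ℝ → α) (ε τ : ℝ) : Set ℝ := {t | ENNReal.ofReal ε ≤ edist (y t) (y (t + τ))}

lemma notMem_bad {y : ℝ → α} {ε τ t : ℝ} : t ∉ bad y ε τ ↔ edist (y t) (y (t + τ)) < ENNReal.ofReal ε := by
  simp [bad]

lemma bad_anti (y : ℝ → α) {ε ε' : ℝ} (h : ε ≤ ε') (τ : ℝ) : bad y ε' τ ⊆ bad y ε τ :=
  fun _ ht => (ENNReal.ofReal_le_ofReal h).trans ht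

lemma bad_add (y : ℝ → α) {a b : ℝ} (ha : 0 ≤ a) (hb : 0 ≤ b) (σ τ : ℝ) :
    bad y (a + b) (σ + τ) ⊆ bad y a σ ∪ {t | t + σ ∈ bad y b τ} := by
  intro t ht
  by_contra hc
  rw [Set.mem_union, not_or] at hc
  have h1 := notMem_bad.1 hc.1
  have h2 : edist (y (t + σ)) (y (t + σ + τ)) < ENNReal.ofReal b := notMem_bad.1 hc.2
  have : edist (y t) (y (t + (σ + τ))) < ENNReal.ofReal (a + b) := by
    rw [ENNReal.ofReal_add ha hb, ← add_assoc]
    exact (edist_triangle _ _ _).trans_lt (ENNReal.add_lt_add h1 h2)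
  exact notMem_bad.2 this ht

lemma bad_neg (y : ℝ → α) (a τ : ℝ) : bad y a (-τ) = {t | t + (-τ) ∈ bad y a τ} := by
  ext t
  simp [bad, edist_comm]

lemma Sm.bad_add {y : ℝ → α} {l l' a b σ τ : ℝ} (h : Sm l (bad y a σ) a) (h' : Sm l' (bad y b τ) b)
    (ha : 0 ≤ a) (hb : 0 ≤ b) : Sm (max l l') (bad y (a + b) (σ + τ)) (a + b) :=
  (h.union (h'.shift σ) ha hb).mono le_rfl (_root_.bad_add y ha hb σ τ) le_rfl

lemma Sm.bad_neg {y : ℝ → α} {l a τ : ℝ} (h : Sm l (bad y a τ) a) : Sm l (bad y a (-τ)) a := by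
  rw [_root_.bad_neg]; exact h.shift _

lemma Sm.bad_mono {y : ℝ → α} {l a b τ : ℝ} (h : Sm l (bad y a τ) a) (hab : a ≤ b) :
    Sm l (bad y b τ) b := h.mono le_rfl (bad_anti y hab τ) hab

/-- Weyl almost periodicity in measure. -/
def WAP (y : ℝ → α) : Prop := ∀ ε > 0, ∃ l, RelDense {τ | Sm l (bad y ε τ) ε}

lemma WAP.window {y : ℝ → α} (h : WAP y) {ε : ℝ} (hε : 0 < ε) :
    ∃ l > 0, ∃ a > 0, ∀ ξ, ∃ τ, 0 ≤ ξ + τ ∧ ξ + τ ≤ a ∧ Sm l (bad y ε τ) ε := by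
  obtain ⟨l, a, ha, h⟩ := h ε hε
  have hl : 0 < l := by obtain ⟨τ, -, hτ⟩ := h 0; exact hτ.1
  refine ⟨l, hl, a, ha, fun ξ => ?_⟩
  obtain ⟨τ, h1, h2⟩ := h (-ξ)
  exact ⟨τ, by linarith [h1.1], by linarith [h1.2], h2⟩

/-- Control of a family of sets by the near-periods of `X`. -/
def CtrlA (X : ℝ → α) (B : ℝ → Set ℝ) : Prop :=
  ∀ ε > 0, ∃ δ > 0, ∀ l > 0, ∃ L > 0, ∀ τ, Sm l (bad X δ τ) δ → Sm L (B τ) ε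

lemma CtrlA.mono {X : ℝ → α} {B B' : ℝ → Set ℝ} (h : CtrlA X B) (hB : ∀ τ, B' τ ⊆ B τ) : CtrlA X B' := by
  intro ε hε
  obtain ⟨δ, hδ, h⟩ := h ε hε
  refine ⟨δ, hδ, fun l hl => ?_⟩
  obtain ⟨L, hL, h⟩ := h l hl
  exact ⟨L, hL, fun τ hτ => (h τ hτ).mono le_rfl (hB τ) le_rfl⟩

lemma CtrlA.union {X : ℝ → α} {B B' : ℝ → Set ℝ} (h : CtrlA X B) (h' : CtrlA X B') :
    CtrlA X (fun τ => B τ ∪ B' τ) := by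
  intro ε hε
  obtain ⟨δ, hδ, h⟩ := h (ε / 2) (by positivity)
  obtain ⟨δ', hδ', h'⟩ := h' (ε / 2) (by positivity)
  refine ⟨min δ δ', lt_min hδ hδ', fun l hl => ?_⟩
  obtain ⟨L, hL, h⟩ := h l hl
  obtain ⟨L', hL', h'⟩ := h' l hl
  refine ⟨max L L', lt_max_of_lt_left hL, fun τ hτ => ?_⟩
  have h1 := h τ (hτ.bad_mono (min_le_left _ _))
  have h2 := h' τ (hτ.bad_mono (min_le_right _ _))
  exact (h1.union h2 (by positivity) (by positivity)).mono le_rfl subset_rfl (by linarith)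

lemma CtrlA.empty (X : ℝ → α) : CtrlA X (fun _ => ∅) := by
  intro ε hε
  refine ⟨1, one_pos, fun l hl => ⟨1, one_pos, fun τ _ => ⟨one_pos, fun L _ ξ => by simp⟩⟩⟩

lemma CtrlA.biUnion {X : ℝ → α} {B : ℕ → ℝ → Set ℝ} (h : ∀ i, CtrlA X (B i)) (n : ℕ) :
    CtrlA X (fun τ => {t | ∃ i ≤ n, t ∈ B i τ}) := by
  induction n with
  | zero => exact (h 0).mono fun τ t ⟨i, hi, ht⟩ => by rwa [Nat.le_zero.1 hi] at ht
  | succ n ih =>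
    refine (ih.union (h (n + 1))).mono fun τ t ⟨i, hi, ht⟩ => ?_
    rcases Nat.le_succ_iff.1 hi with h1 | h1
    · exact Or.inl ⟨i, h1, ht⟩
    · rw [h1] at ht; exact Or.inr ht

lemma CtrlA.approx {X : ℝ → α} {B : ℝ → Set ℝ}
    (h : ∀ ε > 0, ∃ B1, CtrlA X B1 ∧ ∃ T l, Sm l T ε ∧ ∀ τ, B τ ⊆ B1 τ ∪ (T ∪ {t | t + τ ∈ T})) :
    CtrlA X B := by
  intro ε hε
  obtain ⟨B1, hB1, T, l0, hT, hsub⟩ := h (ε / 3) (by positivity)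
  obtain ⟨δ, hδ, h⟩ := hB1 (ε / 3) (by positivity)
  refine ⟨δ, hδ, fun l hl => ?_⟩
  obtain ⟨L, hL, h⟩ := h l hl
  refine ⟨max L (max l0 l0), lt_max_of_lt_left hL, fun τ hτ => ?_⟩
  exact ((h τ hτ).union (hT.union (hT.shift τ) (by positivity) (by positivity)) (by positivity)
    (by positivity)).mono le_rfl (hsub τ) (by linarith)

/-- Control of a function. -/
def Ctrl (X : ℝ → α) (y : ℝ → β) : Prop := ∀ ε > 0, CtrlA X (bad y ε)

lemma Ctrl.refl (X : ℝ → α) : Ctrl X X := by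
  intro ε hε ε' hε'
  exact ⟨min ε ε', lt_min hε hε', fun l hl => ⟨l, hl, fun τ hτ =>
    hτ.mono le_rfl (bad_anti X (min_le_left _ _) τ) (min_le_right _ _)⟩⟩

lemma Ctrl.wap {X : ℝ → α} {y : ℝ → β} (h : Ctrl X y) (hX : WAP X) : WAP y := by
  intro ε hε
  obtain ⟨δ, hδ, h⟩ := h ε hε ε hε
  obtain ⟨l, a, ha, hr⟩ := hX δ hδ
  have hl : 0 < l := by obtain ⟨τ, -, hτ⟩ := hr 0; exact hτ.1
  obtain ⟨L, hL, h⟩ := h l hl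
  refine ⟨L, a, ha, fun ξ => ?_⟩
  obtain ⟨τ, h1, h2⟩ := hr ξ
  exact ⟨τ, h1, h τ h2⟩

lemma Ctrl.comp {γ : Type*} [PseudoEMetricSpace γ] {X : ℝ → α} {y : ℝ → β} (h : Ctrl X y) (z : ℝ → γ)
    (K : ℝ) (hK : 0 < K)
    (hz : ∀ t t' ε, 0 < ε → edist (y t) (y t') < ENNReal.ofReal ε → edist (z t) (z t') < ENNReal.ofReal (K * ε)) :
    Ctrl X z := by
  intro ε hε
  refine (h (ε / K) (by positivity)).mono fun τ t ht => ?_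
  by_contra hc
  have := hz _ _ _ (by positivity) (notMem_bad.1 hc)
  rw [mul_div_cancel₀ _ hK.ne'] at this
  exact notMem_bad.2 this ht

lemma Ctrl.prod {γ : Type*} [PseudoEMetricSpace γ] {X : ℝ → α} {y : ℝ → β} {z : ℝ → γ} (h : Ctrl X y)
    (h' : Ctrl X z) : Ctrl X (fun t => (y t, z t)) := by
  intro ε hε
  refine ((h ε hε).union (h' ε hε)).mono fun τ t ht => ?_
  simp only [bad, Prod.edist_eq, Set.mem_ofPred_eq, le_max_iff] at ht
  exact ht

lemma Ctrl.of_approx {X : ℝ → α} {f : ℝ → β}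
    (h : ∀ ε > 0, ∃ y : ℝ → β, Ctrl X y ∧ ∀ t, edist (y t) (f t) < ENNReal.ofReal ε) : Ctrl X f := by
  intro ε hε
  obtain ⟨y, hy, hyf⟩ := h (ε / 3) (by positivity)
  refine (hy (ε / 3) (by positivity)).mono fun τ t ht => ?_
  by_contra hc
  have h1 := notMem_bad.1 hc
  have h2 := hyf t
  rw [edist_comm] at h2
  have h3 := hyf (t + τ)
  have : edist (f t) (f (t + τ)) < ENNReal.ofReal ε := by
    have e : ε = ε / 3 + ε / 3 + ε / 3 := by ring
    rw [e, ENNReal.ofReal_add (by positivity) (by positivity), ENNReal.ofReal_add (by positivity) (by positivity)]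
    exact (edist_triangle4 _ (y t) (y (t + τ)) _).trans_lt (ENNReal.add_lt_add (ENNReal.add_lt_add h2 h1) h3)
  exact notMem_bad.2 this ht

/-- Control of a set. -/
def CtrlS (X : ℝ → α) (A : Set ℝ) : Prop := CtrlA X (fun τ => {t | ¬ (t ∈ A ↔ t + τ ∈ A)})

open Classical in
lemma Ctrl.ite {X : ℝ → α} {y z : ℝ → β} {A : Set ℝ} (hy : Ctrl X y) (hz : Ctrl X z) (hA : CtrlS X A) :
    Ctrl X (fun t => if t ∈ A then y t else z t) := by
  intro ε hε
  refine (((hy ε hε).union (hz ε hε)).union hA).mono fun τ t ht => ?_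
  by_contra hc
  simp only [Set.mem_union, not_or, Set.mem_ofPred_eq, not_not] at hc
  obtain ⟨⟨h1, h2⟩, h3⟩ := hc
  simp only [bad, Set.mem_ofPred_eq] at ht
  by_cases hA : t ∈ A
  · rw [if_pos hA, if_pos (h3.1 hA)] at ht
    exact h1 ht
  · rw [if_neg hA, if_neg (fun h => hA (h3.2 h))] at ht
    exact h2 ht

/-- Tail lemma. -/
lemma tail {Z : ℝ → α} (hZ : WAP Z) (B B' : ℕ → Set ℝ) (hm : ∀ n, MeasurableSet (B' n)) (ha : Antitone B')
    (he : ⋂ n, B' n = ∅) (ε0 : ℝ) (hε0 : 0 < ε0)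
    (hB : ∀ n t τ, t ∈ B n → t ∉ bad Z ε0 τ → t + τ ∈ B' n) (ε : ℝ) (hε : 0 < ε) :
    ∃ n l, Sm l (B n) ε := by
  set ε' := min ε0 (ε / 4) with hε'
  have hε'0 : 0 < ε' := lt_min hε0 (by positivity)
  obtain ⟨l, hl, a, ha0, hw⟩ := hZ.window hε'0
  have ht : Tendsto (fun n => volume (B' n ∩ Set.Icc 0 (a + l))) atTop (𝓝 0) := by
    have := tendsto_measure_iInter_atTop (μ := volume) (s := fun n => B' n ∩ Set.Icc 0 (a + l))
      (fun n => ((hm n).inter measurableSet_Icc).nullMeasurableSet)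
      (fun i j h => Set.inter_subset_inter_left _ (ha h))
      ⟨0, ((measure_mono Set.inter_subset_right).trans_lt measure_Icc_lt_top).ne⟩
    rwa [← Set.iInter_inter, he, Set.empty_inter, measure_empty] at this
  obtain ⟨n, hn⟩ := (ht.eventually_lt_const (u := ENNReal.ofReal (ε' * l)) (by positivity)).exists
  refine ⟨n, l, (Sm.of_window (c := 2 * ε') hl (by positivity) fun ξ => ?_).mono le_rfl subset_rfl
    (by have := min_le_right ε0 (ε / 4); linarith)⟩
  obtain ⟨τ, h0, h1, h2⟩ := hw ξ
  have hsub : B n ∩ Set.Icc ξ (ξ + l) ⊆ (bad Z ε' τ ∩ Set.Icc ξ (ξ + l)) ∪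
     ({t | t + τ ∈ B' n ∩ Set.Icc 0 (a + l)} ∩ Set.Icc ξ (ξ + l)) := by
    rintro t ⟨t1, t2⟩
    by_cases hb : t ∈ bad Z ε' τ
    · exact Or.inl ⟨hb, t2⟩
    · refine Or.inr ⟨⟨hB n t τ t1 fun h => hb (bad_anti Z (min_le_left _ _) τ h), ?_, ?_⟩, t2⟩
      · linarith [t2.1]
      · linarith [t2.2]
  refine (measure_mono hsub).trans ((measure_union_le _ _).trans ?_)
  have : 2 * ε' * l = ε' * l + ε' * l := by ring
  rw [this, ENNReal.ofReal_add (by positivity) (by positivity)]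
  refine add_le_add (h2.2 l le_rfl ξ) ?_
  rw [vol_shift]
  exact (measure_mono Set.inter_subset_left).trans hn.le

end Small


section Transl
variable {α β : Type*} [PseudoEMetricSpace α] [PseudoEMetricSpace β]

lemma set_transl (A : Set ℝ) (hA : MeasurableSet A) (hfin : volume A ≠ ⊤) :
    Tendsto (fun h : ℝ => volume ({t | ¬ (t + h ∈ A ↔ t ∈ A)})) (𝓝 0) (𝓝 0) := by
  have := tendsto_measure_symmDiff_preimage_nhds_zero (μ := (volume : Measure ℝ)) (ν := (volume : Measure ℝ))
    (l := 𝓝 (0:ℝ))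
    (f := fun h : ℝ => (⟨fun t => t + h, by fun_prop⟩ : C(ℝ, ℝ)))
    (g := (⟨fun t => t + 0, by fun_prop⟩ : C(ℝ, ℝ))) (s := A) ?_ ?_ ?_ hA.nullMeasurableSet hfin
  · refine this.congr fun h => ?_
    congr 1
    ext t
    simp [Set.mem_symmDiff]
    tauto
  · have hc : Continuous (fun h : ℝ => (⟨fun t => t + h, by fun_prop⟩ : C(ℝ, ℝ))) := by
      refine ContinuousMap.continuous_of_continuous_uncurry _ ?_
      exact continuous_snd.add continuous_fst
    exact hc.tendsto 0
  · exact Eventually.of_forall fun h => measurePreserving_add_right volume h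
  · exact measurePreserving_add_right volume 0

/-- Local continuity in measure of translations. -/
lemma local_transl {y : ℝ → α} (hy : StronglyMeasurable y) (R ε η : ℝ) (hε : 0 < ε) (hη : 0 < η) :
    ∃ ω > 0, ∀ h, |h| < ω → volume (bad y ε h ∩ Set.Icc 0 R) ≤ ENNReal.ofReal η := by
  set W := Set.Icc (-1) (R + 1) with hW
  have : IsFiniteMeasure (volume.restrict W) := ⟨by rw [Measure.restrict_apply_univ]; exact measure_Icc_lt_top⟩
  obtain ⟨T, hTm, hTv, hTu⟩ := tendstoUniformlyOn_of_ae_tendsto' (μ := volume.restrict W)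
    (f := fun n => (hy.approx n : ℝ → α)) (g := y)
    (fun n => (hy.approx n).stronglyMeasurable) hy (Eventually.of_forall fun x => hy.tendsto_approx x)
    (ε := η / 3) (by positivity)
  rw [Measure.restrict_apply hTm] at hTv
  obtain ⟨n, hn⟩ := (EMetric.tendstoUniformlyOn_iff.1 hTu (ENNReal.ofReal (ε / 2)) (by positivity)).exists
  set s := hy.approx n
  set A : α → Set ℝ := fun v => s ⁻¹' {v} ∩ W with hA
  have hsum : Tendsto (fun h : ℝ => ∑ v ∈ s.range, volume ({t | ¬ (t + h ∈ A v ↔ t ∈ A v)})) (𝓝 0) (𝓝 0) := by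
    have := tendsto_finsetSum s.range (fun v _ => set_transl (A v)
      ((s.measurableSet_fiber v).inter measurableSet_Icc)
      ((measure_mono Set.inter_subset_right).trans_lt measure_Icc_lt_top).ne)
    simpa using this
  obtain ⟨r, hr, hball⟩ := Metric.eventually_nhds_iff.1
    (hsum.eventually_lt_const (u := ENNReal.ofReal (η / 3)) (by positivity))
  refine ⟨min r 1, lt_min hr one_pos, fun h hh => ?_⟩
  have hsub : bad y ε h ∩ Set.Icc 0 R ⊆ ((T ∩ W) ∪ {t | t + h ∈ T ∩ W}) ∪
      ⋃ v ∈ s.range, {t | ¬ (t + h ∈ A v ↔ t ∈ A v)} := by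
    rintro t ⟨ht, htR⟩
    by_contra hc
    simp only [Set.mem_union, not_or, Set.mem_ofPred_eq, Set.mem_iUnion, not_exists, not_not] at hc
    obtain ⟨⟨h1, h2⟩, h3⟩ := hc
    have hh1 := abs_lt.1 (hh.trans_le (min_le_right _ _))
    have w1 : t ∈ W := ⟨by linarith [htR.1], by linarith [htR.2]⟩
    have w2 : t + h ∈ W := ⟨by linarith [htR.1], by linarith [htR.2]⟩
    have g1 := hn t (fun hT => h1 ⟨hT, w1⟩)
    have g2 := hn (t + h) (fun hT => h2 ⟨hT, w2⟩)
    have g3 : s (t + h) = s t := ((h3 (s t) (s.mem_range_self t)).2 ⟨rfl, w1⟩).1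
    rw [g3, edist_comm] at g2
    have : edist (y t) (y (t + h)) < ENNReal.ofReal ε := by
      rw [show ε = ε / 2 + ε / 2 by ring, ENNReal.ofReal_add (by positivity) (by positivity)]
      exact (edist_triangle _ (s t) _).trans_lt (ENNReal.add_lt_add g1 g2)
    exact notMem_bad.2 this ht
  have hb := hball (y := h) (by rw [Real.dist_eq, sub_zero]; exact hh.trans_le (min_le_left _ _))
  have e : volume {t | t + h ∈ T ∩ W} = volume (W ∩ T) := by
    rw [Set.inter_comm W]
    exact measure_preimage_add_right volume h (T ∩ W)
  calc volume (bad y ε h ∩ Set.Icc 0 R) ≤ _ := measure_mono hsub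
    _ ≤ (volume (T ∩ W) + volume {t | t + h ∈ T ∩ W}) + ∑ v ∈ s.range, volume ({t | ¬ (t + h ∈ A v ↔ t ∈ A v)}) := by
      refine (measure_union_le _ _).trans (add_le_add (measure_union_le _ _) (measure_biUnion_finset_le _ _))
    _ ≤ (ENNReal.ofReal (η / 3) + ENNReal.ofReal (η / 3)) + ENNReal.ofReal (η / 3) := by
      refine add_le_add (add_le_add ?_ (e.le.trans ?_)) hb.le
      · exact hTv
      · rw [Set.inter_comm]; exact hTv
    _ = ENNReal.ofReal η := by
      rw [← ENNReal.ofReal_add (by positivity) (by positivity), ← ENNReal.ofReal_add (by positivity) (by positivity)]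
      congr 1; ring

lemma WAP.transl {y : ℝ → α} (hw : WAP y) (hy : StronglyMeasurable y) (ε : ℝ) (hε : 0 < ε) :
    ∃ ω > 0, ∃ l, ∀ h, |h| < ω → Sm l (bad y ε h) ε := by
  set ε' := ε / 6 with hε'
  have hε'0 : 0 < ε' := by positivity
  obtain ⟨l, hl, a, ha0, hw⟩ := hw.window hε'0
  obtain ⟨ω, hω, hloc⟩ := local_transl hy (a + l) ε' (ε' * l) hε'0 (by positivity)
  refine ⟨ω, hω, l, fun h hh => ?_⟩
  refine (Sm.of_window (c := 3 * ε') hl (by positivity) fun ξ => ?_).mono le_rfl subset_rfl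
    (by rw [hε']; linarith)
  obtain ⟨τ, h0, h1, h2⟩ := hw ξ
  have hsub : bad y ε h ∩ Set.Icc ξ (ξ + l) ⊆ ((bad y ε' τ ∩ Set.Icc ξ (ξ + l)) ∪
     ({t | t + h ∈ bad y ε' τ} ∩ Set.Icc ξ (ξ + l))) ∪ ({t | t + τ ∈ bad y ε' h ∩ Set.Icc 0 (a + l)} ∩ Set.Icc ξ (ξ + l)) := by
    rintro t ⟨t1, t2⟩
    by_contra hc
    simp only [Set.mem_union, not_or, Set.mem_inter_iff, t2, and_true, Set.mem_ofPred_eq, Set.mem_Icc] at hc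
    obtain ⟨⟨c1, c2⟩, c3⟩ := hc
    have c1 := notMem_bad.1 c1
    have c2 := notMem_bad.1 c2
    have c3 : t + τ ∉ bad y ε' h := fun hb => c3 ⟨hb, by linarith [t2.1], by linarith [t2.2]⟩
    have c3 := notMem_bad.1 c3
    rw [edist_comm, add_right_comm] at c2
    have : edist (y t) (y (t + h)) < ENNReal.ofReal ε := by
      have e : ENNReal.ofReal (ε' + ε' + ε') ≤ ENNReal.ofReal ε := ENNReal.ofReal_le_ofReal (by rw [hε']; linarith)
      refine lt_of_lt_of_le ?_ e
      rw [ENNReal.ofReal_add (by positivity) (by positivity), ENNReal.ofReal_add (by positivity) (by positivity)]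
      exact (edist_triangle4 _ (y (t + τ)) (y (t + τ + h)) _).trans_lt (ENNReal.add_lt_add (ENNReal.add_lt_add c1 c3) c2)
    exact notMem_bad.2 this t1
  refine (measure_mono hsub).trans ((measure_union_le _ _).trans (add_le_add (measure_union_le _ _) le_rfl |>.trans ?_))
  have : 3 * ε' * l = ε' * l + ε' * l + ε' * l := by ring
  rw [this, ENNReal.ofReal_add (by positivity) (by positivity), ENNReal.ofReal_add (by positivity) (by positivity)]
  refine add_le_add (add_le_add (h2.2 l le_rfl ξ) ((h2.shift h).2 l le_rfl ξ)) ?_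
  rw [vol_shift]
  exact (measure_mono Set.inter_subset_left).trans (hloc h hh)

lemma WAP.pair {y : ℝ → α} {z : ℝ → β} (hy : WAP y) (hz : WAP z) (hzm : StronglyMeasurable z)
    (ε : ℝ) (hε : 0 < ε) : ∃ l, RelDense {τ | Sm l (bad y ε τ) ε ∧ Sm l (bad z ε τ) ε} := by
  set ε' := ε / 3 with hε'
  have hε'0 : 0 < ε' := by positivity
  obtain ⟨ω, hω, l0, htr⟩ := hz.transl hzm ε' hε'0
  obtain ⟨l1, a1, ha1, h1⟩ := hy ε' hε'0
  obtain ⟨l2, a2, ha2, h2⟩ := hz ε' hε'0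
  choose σ hσ1 hσ2 using h1
  choose ρ hρ1 hρ2 using h2
  set a := max a1 a2
  have haa1 : a1 ≤ a := le_max_left _ _
  have haa2 : a2 ≤ a := le_max_right _ _
  set j : ℝ → ℤ := fun ξ => ⌊(σ ξ - ρ ξ) / ω⌋ with hj
  set m : ℤ := ⌈a / ω⌉ + 1
  have hjm : ∀ ξ, j ξ ∈ Set.Icc (-m) m := by
    intro ξ
    have b1 : σ ξ - ρ ξ ≤ a := by linarith [(hσ1 ξ).2, (hρ1 ξ).1]
    have b2 : -a ≤ σ ξ - ρ ξ := by linarith [(hσ1 ξ).1, (hρ1 ξ).2]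
    have hc := Int.le_ceil (a / ω)
    constructor
    · rw [Int.le_floor]
      simp only [m]
      push_cast
      have : -(a / ω) ≤ (σ ξ - ρ ξ) / ω := by rw [← neg_div]; gcongr
      linarith
    · have : (σ ξ - ρ ξ) / ω ≤ a / ω := by gcongr
      have h3 := Int.floor_le ((σ ξ - ρ ξ) / ω)
      have : ((j ξ : ℤ) : ℝ) ≤ ((⌈a / ω⌉ : ℤ) : ℝ) := by simp only [hj]; linarith
      have := Int.cast_le.1 this
      simp only [m]; linarith
  classical
  set c : ℤ → ℝ := fun k => if h : ∃ ξ, j ξ = k then h.choose else 0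
  have hc : ∀ ξ, j (c (j ξ)) = j ξ := by
    intro ξ
    have h : ∃ ξ', j ξ' = j ξ := ⟨ξ, rfl⟩
    have : c (j ξ) = h.choose := dif_pos h
    rw [this]; exact h.choose_spec
  obtain ⟨M, hM⟩ : ∃ M, ∀ k ∈ Set.Icc (-m) m, |c k| ≤ M := by
    obtain ⟨M, hM⟩ := ((Set.finite_Icc (-m) m).image (fun k => |c k|)).bddAbove
    exact ⟨M, fun k hk => hM ⟨k, hk, rfl⟩⟩
  have hMp : 0 ≤ M := (abs_nonneg _).trans (hM _ (hjm 0))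
  refine ⟨max (max (max l1 l1) (max l2 l2)) (max (max l2 l2) l0), 2 * (M + a), ?_, fun ξ => ?_⟩
  · have : 0 < a := ha1.trans_le haa1
    positivity
  · set ξ' := ξ + M + a
    set ξ0 := c (j ξ')
    have hξ0 := abs_le.1 (hM _ (hjm ξ'))
    refine ⟨σ ξ' + - σ ξ0, ⟨?_, ?_⟩, ?_, ?_⟩
    · have := (hσ1 ξ').1; have := (hσ1 ξ0).2
      simp only [ξ'] at *; linarith
    · have := (hσ1 ξ').2; have := (hσ1 ξ0).1
      simp only [ξ'] at *; linarith
    · exact ((hσ2 ξ').bad_add (hσ2 ξ0).bad_neg hε'0.le hε'0.le).mono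
        ((le_max_left _ _).trans (le_max_left _ _)) (bad_anti y (by rw [hε']; linarith) _) (by rw [hε']; linarith)
    · set h := (σ ξ' - ρ ξ') - (σ ξ0 - ρ ξ0)
      have hh : |h| < ω := by
        have e1 : j ξ0 = j ξ' := hc ξ'
        have := Int.abs_sub_lt_one_of_floor_eq_floor e1.symm
        rw [← sub_div, abs_div, abs_of_pos hω, div_lt_one hω] at this
        exact this
      have e : σ ξ' + - σ ξ0 = ρ ξ' + - ρ ξ0 + h := by simp only [h]; ring
      rw [e]
      exact (((hρ2 ξ').bad_add (hρ2 ξ0).bad_neg hε'0.le hε'0.le).bad_add (htr h hh) (by positivity) hε'0.le).mono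
        (le_max_right _ _) (bad_anti z (by rw [hε']; linarith) _) (by rw [hε']; linarith)

lemma WAP.prod {y : ℝ → α} {z : ℝ → β} (hy : WAP y) (hz : WAP z) (hzm : StronglyMeasurable z) :
    WAP (fun t => (y t, z t)) := by
  intro ε hε
  obtain ⟨l, a, ha, h⟩ := hy.pair hz hzm (ε / 2) (by positivity)
  refine ⟨max l l, a, ha, fun ξ => ?_⟩
  obtain ⟨τ, h0, h1, h2⟩ := h ξ
  refine ⟨τ, h0, (h1.union h2 (by positivity) (by positivity)).mono le_rfl (fun t ht => ?_) (by linarith)⟩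
  simp only [bad, Prod.edist_eq, Set.mem_ofPred_eq, le_max_iff] at ht
  rcases ht with ht | ht
  · exact Or.inl (bad_anti y (by linarith) τ ht)
  · exact Or.inr (bad_anti z (by linarith) τ ht)

end Transl


section Level
variable {α β : Type*} [PseudoEMetricSpace α] [PseudoEMetricSpace β]

lemma generic_aux (u : ℝ → ℝ) (hu : Measurable u) (hw : WAP u) (ε : ℝ) (hε : 0 < ε) (S : Finset ℝ)
    (hS : 8 / ε < S.card) (hbad : ∀ c ∈ S, ∀ w > 0, ∀ L, ¬ Sm L {t | |u t - c| ≤ w} ε) : False := by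
  -- separation
  obtain ⟨w, hw0, hsep⟩ : ∃ w > 0, ∀ c ∈ S, ∀ c' ∈ S, c ≠ c' → 4 * w ≤ |c - c'| := by
    have hf := ((S ×ˢ S).filter (fun q => q.1 ≠ q.2)).finite_toSet
    by_cases hne : ((S ×ˢ S).filter (fun q => q.1 ≠ q.2)).Nonempty
    · obtain ⟨q, hq, hmin⟩ := Finset.exists_min_image _ (fun q : ℝ × ℝ => |q.1 - q.2|) hne
      simp only [Finset.mem_filter, Finset.mem_product] at hq
      refine ⟨|q.1 - q.2| / 4, by have := abs_pos.2 (sub_ne_zero.2 hq.2); positivity, fun c hc c' hc' h => ?_⟩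
      have := hmin (c, c') (by simp [hc, hc', h])
      simp only at this
      linarith
    · refine ⟨1, one_pos, fun c hc c' hc' h => ?_⟩
      exact absurd ⟨(c, c'), by simp [hc, hc', h]⟩ hne
  set ε' := min w (ε / 4) with hε'
  have hε'0 : 0 < ε' := lt_min hw0 (by positivity)
  obtain ⟨l, hl, a, ha, hwin⟩ := hw.window hε'0
  set L := max l a
  have hL0 : 0 < L := lt_max_of_lt_left hl
  have hlL : l ≤ L := le_max_left _ _
  have haL : a ≤ L := le_max_right _ _
  set D : ℝ → Set ℝ := fun c => {t | |u t - c| < 2 * w} ∩ Set.Icc 0 (2 * L)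
  have hDm : ∀ c, MeasurableSet (D c) := fun c =>
    (measurableSet_lt ((hu.sub_const c).abs) measurable_const).inter measurableSet_Icc
  have hD : ∀ c ∈ S, ENNReal.ofReal (ε / 4 * L) ≤ volume (D c) := by
    intro c hc
    by_contra hlt
    push Not at hlt
    apply hbad c hc w hw0 L
    refine (Sm.of_window (c := ε / 2) hL0 (by positivity) fun ξ => ?_).mono le_rfl subset_rfl (by linarith)
    obtain ⟨τ, h0, h1, h2⟩ := hwin ξ
    have hsub : {t | |u t - c| ≤ w} ∩ Set.Icc ξ (ξ + L) ⊆ (bad u ε' τ ∩ Set.Icc ξ (ξ + L)) ∪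
       ({t | t + τ ∈ D c} ∩ Set.Icc ξ (ξ + L)) := by
      rintro t ⟨t1, t2⟩
      by_cases hb : t ∈ bad u ε' τ
      · exact Or.inl ⟨hb, t2⟩
      · refine Or.inr ⟨⟨?_, ?_, ?_⟩, t2⟩
        · have := notMem_bad.1 hb
          rw [edist_dist, ENNReal.ofReal_lt_ofReal_iff hε'0, Real.dist_eq, abs_lt] at this
          have t1 : |u t - c| ≤ w := t1
          have h4 := abs_le.1 t1
          have := min_le_left w (ε / 4)
          show |u (t + τ) - c| < 2 * w
          rw [abs_lt]
          constructor <;> linarith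
        · linarith [t2.1]
        · linarith [t2.2]
    refine (measure_mono hsub).trans ((measure_union_le _ _).trans ?_)
    have e : ε / 2 * L = ε / 4 * L + ε / 4 * L := by ring
    rw [e, ENNReal.ofReal_add (by positivity) (by positivity)]
    refine add_le_add ((h2.2 L hlL ξ).trans (ENNReal.ofReal_le_ofReal ?_)) ?_
    · have := min_le_right w (ε / 4)
      gcongr
    · rw [vol_shift]
      exact (measure_mono Set.inter_subset_left).trans hlt.le
  have hdis : Set.PairwiseDisjoint (S : Set ℝ) D := by
    intro c hc c' hc' hne
    rw [Function.onFun, Set.disjoint_left]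
    rintro t ⟨h1, -⟩ ⟨h2, -⟩
    have h3 := hsep c hc c' hc' hne
    have h1 : |u t - c| < 2 * w := h1
    have h2 : |u t - c'| < 2 * w := h2
    have : |c - c'| < 4 * w := by
      rw [abs_lt] at *
      constructor <;> linarith
    linarith
  have h1 := measure_biUnion_finset (μ := volume) hdis (fun c _ => hDm c)
  have h2 : volume (⋃ c ∈ S, D c) ≤ ENNReal.ofReal (2 * L) := by
    refine (measure_mono (Set.iUnion₂_subset fun c _ => Set.inter_subset_right)).trans ?_
    simp
  have h3 : ENNReal.ofReal (S.card * (ε / 4 * L)) ≤ ENNReal.ofReal (2 * L) := by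
    refine le_trans ?_ h2
    rw [h1, ENNReal.ofReal_mul (by positivity), ENNReal.ofReal_natCast, ← nsmul_eq_mul]
    exact Finset.card_nsmul_le_sum _ _ _ hD
  rw [ENNReal.ofReal_le_ofReal_iff (by positivity)] at h3
  rw [div_lt_iff₀ hε] at hS
  nlinarith

lemma generic_level (u : ℝ → ℝ) (hu : Measurable u) (hw : WAP u) (a b : ℝ) (hab : a < b) :
    ∃ c ∈ Set.Ioo a b, ∀ ε > 0, ∃ w > 0, ∃ L, Sm L {t | |u t - c| ≤ w} ε := by
  by_contra hcon
  push Not at hcon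
  have h1 : ∀ c ∈ Set.Ioo a b, ∃ n : ℕ, ∀ w > 0, ∀ L, ¬ Sm L {t | |u t - c| ≤ w} (1 / (n + 1)) := by
    intro c hc
    obtain ⟨ε, hε, h⟩ := hcon c hc
    obtain ⟨n, hn⟩ := exists_nat_one_div_lt hε
    exact ⟨n, fun w hw L hS => h w hw L (hS.mono le_rfl subset_rfl hn.le)⟩
  have hex : ∃ n : ℕ, {c ∈ Set.Ioo a b | ∀ w > 0, ∀ L, ¬ Sm L {t | |u t - c| ≤ w} (1 / ((n:ℝ) + 1))}.Infinite := by
    by_contra hfin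
    push Not at hfin
    have : (Set.Ioo a b).Countable := by
      refine (Set.countable_iUnion fun n => (hfin n).countable).mono ?_
      intro c hc
      obtain ⟨n, hn⟩ := h1 c hc
      exact Set.mem_iUnion.2 ⟨n, hc, hn⟩
    have h2 := (this.measure_zero volume)
    rw [Real.volume_Ioo] at h2
    simp at h2
    linarith
  obtain ⟨n, hn⟩ := hex
  set ε : ℝ := 1 / (n + 1)
  have hε : 0 < ε := by positivity
  obtain ⟨S, hS, hcard⟩ := hn.exists_subset_card_eq (⌊8 / ε⌋₊ + 1)
  refine generic_aux u hu hw ε hε S ?_ (fun c hc => (hS hc).2)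
  rw [hcard]
  push_cast
  exact Nat.lt_floor_add_one _

lemma ctrl_level {X : ℝ → α} (hX : WAP X) (u : ℝ → ℝ) (hu : Measurable u) (hc : Ctrl X u) (a b : ℝ) (hab : a < b) :
    ∃ c ∈ Set.Ioo a b, CtrlS X {t | u t < c} := by
  obtain ⟨c, hc1, hc2⟩ := generic_level u hu (hc.wap hX) a b hab
  refine ⟨c, hc1, CtrlA.approx fun ε hε => ?_⟩
  obtain ⟨w, hw, L, hS⟩ := hc2 ε hε
  refine ⟨_, hc w hw, _, L, hS, fun τ t ht => ?_⟩
  by_contra hcon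
  simp only [Set.mem_union, not_or, Set.mem_ofPred_eq, not_le] at hcon ht
  obtain ⟨h1, h2, -⟩ := hcon
  have := notMem_bad.1 h1
  rw [edist_dist, ENNReal.ofReal_lt_ofReal_iff hw, Real.dist_eq, abs_lt] at this
  apply ht
  rcases lt_abs.1 h2 with h | h <;> constructor <;> intro h' <;> linarith

end Level


section Sel
variable {U : Type*} [MetricSpace U]

lemma infDist_close {x x' : U} {A B : Closeds U} (hA : (A : Set U).Nonempty) (hB : (B : Set U).Nonempty) {ε : ℝ} (hε : 0 < ε)
    (hx : edist x x' < ENNReal.ofReal ε) (hAB : edist A B < ENNReal.ofReal ε) :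
    |Metric.infDist x A - Metric.infDist x' B| < 2 * ε := by
  have gen : ∀ {x x' : U} {A B : Closeds U} (hA : (A : Set U).Nonempty) (hB : (B : Set U).Nonempty)
    (hx : edist x x' < ENNReal.ofReal ε) (hAB : edist A B < ENNReal.ofReal ε),
    Metric.infDist x A < Metric.infDist x' B + 2 * ε := by
    intro x x' A B hA hB hx hAB
    have h1 : Metric.infEDist x A ≤ edist x x' + (Metric.infEDist x' B + edist A B) := by
      have a1 := Metric.infEDist_le_edist_add_infEDist (x := x) (y := x') (s := (A : Set U))
      have a2 := Metric.infEDist_le_infEDist_add_hausdorffEDist (x := x') (s := (B : Set U)) (t := (A : Set U))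
      rw [Metric.hausdorffEDist_comm] at a2
      exact a1.trans (by gcongr; exact a2)
    have f1 := Metric.infEDist_ne_top (x := x) hA
    have f2 := Metric.infEDist_ne_top (x := x') hB
    have h2 : Metric.infEDist x A < Metric.infEDist x' B + ENNReal.ofReal (2 * ε) := by
      refine h1.trans_lt ?_
      rw [two_mul, ENNReal.ofReal_add hε.le hε.le, add_left_comm]
      exact ENNReal.add_lt_add_left f2 (ENNReal.add_lt_add hx hAB)
    have h3 := (ENNReal.toReal_lt_toReal f1 (ENNReal.add_ne_top.2 ⟨f2, ENNReal.ofReal_ne_top⟩)).2 h2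
    rw [ENNReal.toReal_add f2 ENNReal.ofReal_ne_top, ENNReal.toReal_ofReal (by positivity)] at h3
    exact h3
  have g1 := gen hA hB hx hAB
  have g2 := gen hB hA (by rwa [edist_comm]) (by rwa [edist_comm])
  rw [abs_lt]; constructor <;> linarith

lemma infDist_meas {g : ℝ → U} {F : ℝ → Closeds U} (hg : StronglyMeasurable g) (hF : StronglyMeasurable F) :
    Measurable (fun t => Metric.infDist (g t) (F t)) := by
  have h1 : StronglyMeasurable (fun t => Metric.infEDist (g t) (F t : Set U)) :=
    Closeds.continuous_infEDist.comp_stronglyMeasurable (hg.prodMk hF)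
  exact h1.measurable.ennreal_toReal

/-- One approximation step. -/
lemma lemmaA {α : Type*} [PseudoEMetricSpace α] {X : ℝ → α} (hX : WAP X) {y : ℝ → U} {F : ℝ → Closeds U}
    (hFne : ∀ t, (F t : Set U).Nonempty) (hy : StronglyMeasurable y) (hF : StronglyMeasurable F)
    (cy : Ctrl X y) (cF : Ctrl X F) (δ : ℝ) (hδ : 0 < δ) :
    ∃ y' : ℝ → U, StronglyMeasurable y' ∧ Ctrl X y' ∧ (∀ t, Metric.infDist (y' t) (F t) ≤ δ) ∧
      ∀ t, dist (y' t) (y t) ≤ Metric.infDist (y t) (F t) + δ := by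
  set Z : ℝ → U × Closeds U := fun t => (y t, F t) with hZdef
  have hZ : StronglyMeasurable Z := hy.prodMk hF
  have cZ : Ctrl X Z := cy.prod cF
  have wZ : WAP Z := cZ.wap hX
  obtain ⟨C, hC1, hC2, hC3⟩ := hZ.isSeparable_range.exists_countable_dense_subset
  have hCne : C.Nonempty := by
    rw [← closure_nonempty_iff]
    exact ⟨_, hC3 ⟨0, rfl⟩⟩
  obtain ⟨e, rfl⟩ := hC2.exists_eq_range hCne
  have hti : ∀ i, ∃ t, Z t = e i := fun i => hC1 ⟨i, rfl⟩
  choose T hT using hti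
  have hui : ∀ i, ∃ u ∈ (F (T i) : Set U), dist (y (T i)) u < Metric.infDist (y (T i)) (F (T i)) + δ / 8 :=
    fun i => (Metric.infDist_lt_iff (hFne _)).1 (by linarith)
  choose u huF hud using hui
  set v : ℕ → ℝ → ℝ := fun i t => max (Metric.infDist (u i) (F t)) (dist (u i) (y t) - Metric.infDist (y t) (F t)) with hv
  have hvm : ∀ i, Measurable (v i) := by
    intro i
    refine (infDist_meas stronglyMeasurable_const hF).max (Measurable.sub ?_ (infDist_meas hy hF))
    exact ((continuous_const.dist continuous_id).comp_stronglyMeasurable hy).measurable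
  have hvl : ∀ i t t' ε, 0 < ε → edist (Z t) (Z t') < ENNReal.ofReal ε → |v i t - v i t'| < 3 * ε := by
    intro i t t' ε hε h
    rw [Prod.edist_eq, max_lt_iff] at h
    obtain ⟨h1, h2⟩ := h
    have a1 := infDist_close (x := u i) (x' := u i) (hFne t) (hFne t') hε (by simpa using hε) h2
    have a2 := infDist_close (hFne t) (hFne t') hε h1 h2
    have a3 : |dist (u i) (y t) - dist (u i) (y t')| < ε := by
      have h1 : edist (y t) (y t') < ENNReal.ofReal ε := h1
      rw [edist_dist, ENNReal.ofReal_lt_ofReal_iff hε] at h1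
      rw [dist_comm (u i), dist_comm (u i)]
      exact (abs_dist_sub_le _ _ _).trans_lt h1
    refine (abs_max_sub_max_le_max _ _ _ _).trans_lt (max_lt (by linarith) ?_)
    have : dist (u i) (y t) - Metric.infDist (y t) (F t) - (dist (u i) (y t') - Metric.infDist (y t') (F t')) =
      (dist (u i) (y t) - dist (u i) (y t')) - (Metric.infDist (y t) (F t) - Metric.infDist (y t') (F t')) := by ring
    rw [this]
    refine (abs_sub _ _).trans_lt ?_
    linarith
  have cv : ∀ i, Ctrl X (v i) := by
    intro i
    refine cZ.comp (v i) 3 (by norm_num) fun t t' ε hε h => ?_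
    rw [edist_dist, Real.dist_eq, ENNReal.ofReal_lt_ofReal_iff (by positivity)]
    exact hvl i t t' ε hε h
  have hsmall : ∀ t, ∃ i, v i t < δ / 4 := by
    intro t
    have h1 : Z t ∈ closure (Set.range e) := hC3 ⟨t, rfl⟩
    obtain ⟨z, ⟨i, rfl⟩, hi⟩ := EMetric.mem_closure_iff.1 h1 (ENNReal.ofReal (δ / 24)) (by positivity)
    refine ⟨i, ?_⟩
    rw [← hT i] at hi
    have h2 := (abs_lt.1 (hvl i t (T i) _ (by positivity) hi)).2
    have h3 : v i (T i) < δ / 8 := by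
      refine max_lt ?_ ?_
      · rw [Metric.infDist_zero_of_mem (huF i)]; positivity
      · have := hud i; rw [dist_comm] at this; linarith
    linarith
  have hlev : ∀ i, ∃ c ∈ Set.Ioo (δ / 2) δ, CtrlS X {t | v i t < c} := fun i =>
    ctrl_level hX (v i) (hvm i) (cv i) _ _ (by linarith)
  choose c hc1 hc2 using hlev
  have hex : ∀ t, ∃ i, v i t < c i := fun t => by
    obtain ⟨i, hi⟩ := hsmall t
    exact ⟨i, by linarith [(hc1 i).1]⟩
  classical
  set ι : ℝ → ℕ := fun t => Nat.find (hex t) with hι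
  have hιs : ∀ t, v (ι t) t < c (ι t) := fun t => Nat.find_spec (hex t)
  have hιm : Measurable ι := measurable_find hex fun k => measurableSet_lt (hvm k) measurable_const
  refine ⟨fun t => u (ι t), ?_, ?_, ?_, ?_⟩
  · exact (StronglyMeasurable.of_discrete (f := u)).comp_measurable hιm
  · intro ε hε
    have key : CtrlA X (fun τ => {t | ι t ≠ ι (t + τ)}) := by
      refine CtrlA.approx fun ε hε => ?_
      obtain ⟨n, l, hn⟩ := tail wZ (fun n => {t | ∀ i ≤ n, c i ≤ v i t}) (fun n => {t | ∀ i ≤ n, δ / 4 ≤ v i t})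
        (fun n => by
          have : {t | ∀ i ≤ n, δ / 4 ≤ v i t} = ⋂ i, ⋂ (_ : i ≤ n), {t | δ / 4 ≤ v i t} := by
            ext t; simp
          rw [this]
          exact MeasurableSet.iInter fun i => MeasurableSet.iInter fun _ => measurableSet_le measurable_const (hvm i))
        (fun m n hmn t ht i hi => ht i (hi.trans hmn))
        (by
          rw [Set.eq_empty_iff_forall_notMem]
          intro t ht
          obtain ⟨i, hi⟩ := hsmall t
          have := Set.mem_iInter.1 ht i i le_rfl
          linarith)
        (δ / 12) (by positivity)
        (fun n t τ ht hb i hi => by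
          have h1 := ht i hi
          have h2 := abs_lt.1 (hvl i t (t + τ) _ (by positivity) (notMem_bad.1 hb))
          have := (hc1 i).1
          linarith [h2.2])
        ε hε
      refine ⟨_, CtrlA.biUnion hc2 n, _, l, hn, fun τ t ht => ?_⟩
      by_contra hcon
      simp only [Set.mem_union, not_or, Set.mem_ofPred_eq, not_exists, not_and, not_not] at hcon
      obtain ⟨h1, h2, -⟩ := hcon
      push Not at h2
      obtain ⟨i, hi, hi2⟩ := h2
      have hle : ι t ≤ n := (Nat.find_min' (hex t) hi2).trans hi
      have hs : v (ι t) (t + τ) < c (ι t) := (h1 _ hle).1 (hιs t)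
      apply ht
      symm
      apply le_antisymm (Nat.find_min' (hex (t + τ)) hs)
      have hle2 : ι (t + τ) ≤ ι t := Nat.find_min' (hex (t + τ)) hs
      exact Nat.find_min' (hex t) ((h1 _ (hle2.trans hle)).2 (hιs (t + τ)))
    refine key.mono fun τ t ht => ?_
    intro heq
    simp only [bad, Set.mem_ofPred_eq] at ht
    rw [heq, edist_self] at ht
    simp at ht
    linarith
  · intro t
    exact ((le_max_left _ _).trans_lt (hιs t)).le.trans (hc1 _).2.le
  · intro t
    have := ((le_max_right _ _).trans_lt (hιs t)).le.trans (hc1 _).2.le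
    linarith

end Sel


section Sel2
variable {U : Type*} [MetricSpace U] [CompleteSpace U]

lemma lim_lemma {α : Type*} [PseudoEMetricSpace α] {X : ℝ → α} (z : ℕ → ℝ → U) (C : ℝ)
    (hm : ∀ n, StronglyMeasurable (z n)) (hc : ∀ n, Ctrl X (z n))
    (hd : ∀ n t, dist (z n t) (z (n + 1) t) ≤ C / 2 / 2 ^ n) :
    ∃ f : ℝ → U, StronglyMeasurable f ∧ Ctrl X f ∧ (∀ t, Tendsto (fun n => z n t) atTop (𝓝 (f t))) ∧
      ∀ n t, dist (z n t) (f t) ≤ C / 2 ^ n := by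
  have h1 : ∀ t, ∃ a, Tendsto (fun n => z n t) atTop (𝓝 a) := fun t =>
    cauchySeq_tendsto_of_complete (cauchySeq_of_le_geometric_two (fun n => hd n t))
  choose f hf using h1
  have hb : ∀ n t, dist (z n t) (f t) ≤ C / 2 ^ n := fun n t =>
    dist_le_of_le_geometric_two_of_tendsto (fun n => hd n t) (hf t) n
  refine ⟨f, stronglyMeasurable_of_tendsto atTop hm (tendsto_pi_nhds.2 hf), Ctrl.of_approx fun ε hε => ?_, hf, hb⟩
  have ht : Tendsto (fun n : ℕ => C * (1 / 2 : ℝ) ^ n) atTop (𝓝 (C * 0)) :=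
    (tendsto_pow_atTop_nhds_zero_of_lt_one (by norm_num) (by norm_num)).const_mul C
  rw [mul_zero] at ht
  obtain ⟨n, hn⟩ := (ht.eventually (gt_mem_nhds hε)).exists
  refine ⟨z n, hc n, fun t => ?_⟩
  rw [edist_dist]
  refine (ENNReal.ofReal_lt_ofReal_iff hε).2 ((hb n t).trans_lt ?_)
  rw [one_div, inv_pow, ← div_eq_mul_inv] at hn
  exact hn

lemma lemmaB {α : Type*} [PseudoEMetricSpace α] {X : ℝ → α} (hX : WAP X) {g : ℝ → U} {F : ℝ → Closeds U}
    (hFne : ∀ t, (F t : Set U).Nonempty) (hg : StronglyMeasurable g) (hF : StronglyMeasurable F)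
    (cg : Ctrl X g) (cF : Ctrl X F) (ε : ℝ) (hε : 0 < ε) :
    ∃ f : ℝ → U, StronglyMeasurable f ∧ Ctrl X f ∧ (∀ t, f t ∈ (F t : Set U)) ∧
      ∀ t, dist (f t) (g t) ≤ Metric.infDist (g t) (F t) + ε := by
  have hs : ∀ (y : {y : ℝ → U // StronglyMeasurable y ∧ Ctrl X y}) (n : ℕ),
      ∃ y' : {y : ℝ → U // StronglyMeasurable y ∧ Ctrl X y},
      (∀ t, Metric.infDist (y'.1 t) (F t) ≤ ε / 4 / 2 ^ n) ∧
      ∀ t, dist (y'.1 t) (y.1 t) ≤ Metric.infDist (y.1 t) (F t) + ε / 4 / 2 ^ n := by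
    intro y n
    obtain ⟨y', a, b, c, d⟩ := lemmaA hX hFne y.2.1 hF y.2.2 cF (ε / 4 / 2 ^ n) (by positivity)
    exact ⟨⟨y', a, b⟩, c, d⟩
  choose step h1 h2 using hs
  let Y : ℕ → {y : ℝ → U // StronglyMeasurable y ∧ Ctrl X y} :=
    fun n => Nat.rec ⟨g, hg, cg⟩ (fun n y => step y n) n
  have hY : ∀ n, Y (n + 1) = step (Y n) n := fun n => rfl
  have k1 : ∀ n t, Metric.infDist ((Y (n + 1)).1 t) (F t) ≤ ε / 4 / 2 ^ n := fun n => h1 (Y n) n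
  have k2 : ∀ n t, dist ((Y (n + 1)).1 t) ((Y n).1 t) ≤ Metric.infDist ((Y n).1 t) (F t) + ε / 4 / 2 ^ n :=
    fun n => h2 (Y n) n
  obtain ⟨f, f1, f2, f3, f4⟩ := lim_lemma (X := X) (fun n => (Y (n + 1)).1) (3 * ε / 4) (fun n => (Y (n + 1)).2.1)
    (fun n => (Y (n + 1)).2.2) (fun n t => by
      rw [dist_comm]
      refine (k2 (n + 1) t).trans ((add_le_add_left (k1 n t) _).trans (le_of_eq ?_))
      rw [pow_succ]; field_simp; ring)
  refine ⟨f, f1, f2, fun t => ?_, fun t => ?_⟩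
  · have hc : Tendsto (fun n => Metric.infDist ((Y (n + 1)).1 t) (F t)) atTop (𝓝 (Metric.infDist (f t) (F t))) :=
      (Metric.continuous_infDist_pt _).continuousAt.tendsto.comp (f3 t)
    have h0 : Tendsto (fun n => Metric.infDist ((Y (n + 1)).1 t) (F t)) atTop (𝓝 0) := by
      have ht : Tendsto (fun n : ℕ => ε / 4 * (1 / 2 : ℝ) ^ n) atTop (𝓝 (ε / 4 * 0)) :=
        (tendsto_pow_atTop_nhds_zero_of_lt_one (by norm_num) (by norm_num)).const_mul _
      rw [mul_zero] at ht
      refine squeeze_zero (fun n => Metric.infDist_nonneg) (fun n => (k1 n t).trans (le_of_eq ?_)) ht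
      rw [one_div, inv_pow, ← div_eq_mul_inv]
    have := tendsto_nhds_unique hc h0
    exact ((F t).isClosed.mem_iff_infDist_zero (hFne t)).2 this
  · have a := f4 0 t
    have b := k2 0 t
    have c : (Y 0).1 = g := rfl
    rw [c] at b
    have d := dist_triangle (f t) ((Y (0 + 1)).1 t) (g t)
    rw [dist_comm (f t) ((Y (0 + 1)).1 t)] at d
    simp only [pow_zero, div_one] at a b
    exact d.trans ((add_le_add a b).trans (le_of_eq (by ring)))

open Classical in
lemma selection {α : Type*} [PseudoEMetricSpace α] {X : ℝ → α} (hX : WAP X) {g : ℝ → U} {F : ℝ → Closeds U}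
    (hFne : ∀ t, (F t : Set U).Nonempty) (hg : StronglyMeasurable g) (hF : StronglyMeasurable F)
    (cg : Ctrl X g) (cF : Ctrl X F) (η : ℝ → ℝ) (hηmono : StrictMonoOn η (Set.Ici 0)) (hη0 : η 0 = 0)
    (hηpos : ∀ t > (0 : ℝ), 0 < η t) :
    ∃ f : ℝ → U, StronglyMeasurable f ∧ Ctrl X f ∧ (∀ t, f t ∈ (F t : Set U)) ∧
      ∀ t, dist (f t) (g t) ≤ Metric.infDist (g t) (F t) + η (Metric.infDist (g t) (F t)) := by
  set s : ℝ → ℝ := fun t => Metric.infDist (g t) (F t) with hs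
  have s0 : ∀ t, 0 ≤ s t := fun t => Metric.infDist_nonneg
  have sm : Measurable s := infDist_meas hg hF
  have cs : Ctrl X s := by
    refine (cg.prod cF).comp s 2 (by norm_num) fun t t' ε hε h => ?_
    rw [Prod.edist_eq, max_lt_iff] at h
    rw [edist_dist, Real.dist_eq]
    exact (ENNReal.ofReal_lt_ofReal_iff (by positivity)).2 (infDist_close (hFne _) (hFne _) hε h.1 h.2)
  have hcl : ∀ k : ℕ, ∃ c ∈ Set.Ioo ((1 : ℝ) / 2 ^ (k + 1)) (1 / 2 ^ k), CtrlS X {t | s t < c} := fun k =>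
    ctrl_level hX s sm cs _ _ (by
      rw [pow_succ]
      have : (0 : ℝ) < 2 ^ k := by positivity
      rw [div_lt_div_iff₀ (by positivity) this]; linarith)
  choose c hc1 hc2 using hcl
  set e : ℕ → ℝ := fun k => min (η (1 / 2 ^ (k + 1))) (1 / 2 ^ k) with he
  have e0 : ∀ k, 0 < e k := fun k => lt_min (hηpos _ (by positivity)) (by positivity)
  choose φ p1 p2 p3 p4 using fun k => lemmaB hX hFne hg hF cg cF (e k) (e0 k)
  let h : ℕ → ℝ → U := fun n => Nat.rec (φ 0) (fun n y => fun t => if t ∈ {t | s t < c n} then φ (n + 1) t else y t) n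
  have h0 : h 0 = φ 0 := rfl
  have hS : ∀ n, h (n + 1) = fun t => if t ∈ {t | s t < c n} then φ (n + 1) t else h n t := fun n => rfl
  have hm : ∀ n, StronglyMeasurable (h n) := by
    intro n
    induction n with
    | zero => exact p1 0
    | succ n ih => rw [hS]; exact StronglyMeasurable.ite (measurableSet_lt sm measurable_const) (p1 _) ih
  have hC : ∀ n, Ctrl X (h n) := by
    intro n
    induction n with
    | zero => exact p2 0
    | succ n ih => rw [hS]; exact (p2 _).ite ih (hc2 n)
  have hmem : ∀ n t, h n t ∈ (F t : Set U) := by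
    intro n t
    induction n with
    | zero => exact p3 0 t
    | succ n ih =>
      rw [hS]; dsimp only; split_ifs
      · exact p3 _ t
      · exact ih
  have cmono : ∀ n, c (n + 1) < c n := fun n => (hc1 (n + 1)).2.trans (hc1 n).1
  have hφ : ∀ n t, s t < c n → h (n + 1) t = φ (n + 1) t := by
    intro n t ht
    rw [hS]; exact if_pos ht
  have hη' : ∀ t, 0 ≤ η (s t) := fun t => by
    rcases (s0 t).eq_or_lt with h | h
    · rw [← h, hη0]
    · exact (hηpos _ h).le
  have hbd : ∀ n t, dist (h n t) (g t) ≤ s t + max (η (s t)) (1 / 2 ^ n) ∧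
      (dist (h n t) (g t) ≤ s t + η (s t) ∨ h n t = φ n t) := by
    intro n t
    induction n with
    | zero => exact ⟨(p4 0 t).trans (by gcongr; exact (min_le_right _ _).trans (le_max_right _ _)), Or.inr rfl⟩
    | succ n ih =>
      by_cases ht : s t < c n
      · rw [hφ n t ht]
        exact ⟨(p4 (n + 1) t).trans (by gcongr; exact (min_le_right _ _).trans (le_max_right _ _)), Or.inr rfl⟩
      · have : h (n + 1) t = h n t := by rw [hS]; exact if_neg ht
        have key : dist (h n t) (g t) ≤ s t + η (s t) := by
          rcases ih.2 with h | h
          · exact h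
          · rw [h]
            refine (p4 n t).trans ?_
            gcongr
            refine (min_le_left _ _).trans (hηmono.monotoneOn ?_ (s0 t) ?_)
            · exact Set.mem_Ici.2 (by positivity)
            · push Not at ht; exact (hc1 n).1.le.trans ht
        rw [this]
        exact ⟨key.trans (by gcongr; exact le_max_left _ _), Or.inl key⟩
  have hstep : ∀ n t, dist (h n t) (h (n + 1) t) ≤ 8 / 2 / 2 ^ n := by
    intro n t
    by_cases ht : s t < c n
    · have a : dist (h n t) (g t) ≤ s t + 1 / 2 ^ n := by
        have : h n t = φ n t := by
          cases n with
          | zero => rfl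
          | succ n => exact hφ n t (ht.trans (cmono n))
        rw [this]
        exact (p4 n t).trans (by gcongr; exact min_le_right _ _)
      have b : dist (h (n + 1) t) (g t) ≤ s t + 1 / 2 ^ n := by
        rw [hφ n t ht]
        refine (p4 (n + 1) t).trans ?_
        gcongr
        refine (min_le_right _ _).trans ?_
        exact ((hc1 n).1.trans (hc1 n).2).le
      have d := dist_triangle_right (h n t) (h (n + 1) t) (g t)
      have e : s t ≤ 1 / 2 ^ n := (ht.trans (hc1 n).2).le
      have : (8 : ℝ) / 2 / 2 ^ n = 4 * (1 / 2 ^ n) := by ring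
      rw [this]; linarith
    · have : h (n + 1) t = h n t := by rw [hS]; exact if_neg ht
      rw [this, dist_self]; positivity
  obtain ⟨f, f1, f2, f3, f4⟩ := lim_lemma (X := X) h 8 hm hC hstep
  refine ⟨f, f1, f2, fun t => (F t).isClosed.mem_of_tendsto (f3 t) (Eventually.of_forall fun n => hmem n t), fun t => ?_⟩
  have t1 : Tendsto (fun n => dist (h n t) (g t)) atTop (𝓝 (dist (f t) (g t))) := (f3 t).dist tendsto_const_nhds
  have t2 : Tendsto (fun n : ℕ => s t + max (η (s t)) (1 / 2 ^ n)) atTop (𝓝 (s t + max (η (s t)) 0)) := by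
    refine tendsto_const_nhds.add (tendsto_const_nhds.max ?_)
    have := tendsto_pow_atTop_nhds_zero_of_lt_one (r := (1 / 2 : ℝ)) (by norm_num) (by norm_num)
    simpa only [one_div, inv_pow] using this
  rw [max_eq_left (hη' t)] at t2
  exact le_of_tendsto_of_tendsto' t1 t2 fun n => (hbd n t).1

end Sel2


section Conv
variable {α : Type*} [PseudoEMetricSpace α]

lemma bad_meas {y : ℝ → α} (hy : StronglyMeasurable y) (ε τ : ℝ) : MeasurableSet (bad y ε τ) := by
  have h2 : StronglyMeasurable (fun t => y (t + τ)) := hy.comp_measurable (measurable_id.add_const τ)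
  exact measurableSet_le measurable_const (hy.edist h2).measurable

/-- Markov: smallness in `weylD` gives smallness of bad sets. -/
lemma sm_of_weylD {y : ℝ → α} (d : α → α → ℝ) {p l ε τ : ℝ} (hp : 1 ≤ p) (hl : 0 < l) (hε : 0 < ε)
    (hm : MeasurableSet (bad y ε τ)) (hd : ∀ t ∈ bad y ε τ, ε ≤ d (y t) (y (t + τ)))
    (h : weylD d p l y (fun t => y (t + τ)) ≤ ENNReal.ofReal ((ε ^ (p + 1) / 2) ^ (1 / p))) :
    Sm l (bad y ε τ) ε := by
  have hp0 : 0 < p := by linarith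
  have h1 : ∀ ξ, ENNReal.ofReal (1 / l) *
      ∫⁻ t in Set.Icc ξ (ξ + l), ENNReal.ofReal (d (y t) (y (t + τ)) ^ p) ≤ ENNReal.ofReal (ε ^ (p + 1) / 2) := by
    intro ξ
    unfold weylD at h
    rw [← ENNReal.ofReal_rpow_of_nonneg (by positivity) (by positivity),
      ENNReal.rpow_le_rpow_iff (by positivity)] at h
    exact (le_iSup (fun ξ => ENNReal.ofReal (1 / l) *
      ∫⁻ t in Set.Icc ξ (ξ + l), ENNReal.ofReal (d (y t) (y (t + τ)) ^ p)) ξ).trans h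
  have h2 : Sm l (bad y ε τ) (2 * (ε / 2)) := by
    refine Sm.of_window hl (by positivity) fun ξ => ?_
    have h3 : ENNReal.ofReal (ε ^ p) * volume (bad y ε τ ∩ Set.Icc ξ (ξ + l)) ≤
        ∫⁻ t in Set.Icc ξ (ξ + l), ENNReal.ofReal (d (y t) (y (t + τ)) ^ p) := by
      rw [← Measure.restrict_apply hm, ← lintegral_indicator_const hm]
      refine lintegral_mono fun t => ?_
      by_cases ht : t ∈ bad y ε τ
      · rw [Set.indicator_of_mem ht]
        exact ENNReal.ofReal_le_ofReal (Real.rpow_le_rpow hε.le (hd t ht) hp0.le)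
      · rw [Set.indicator_of_notMem ht]; exact zero_le
    have h4 := h1 ξ
    have h5 : ENNReal.ofReal (ε ^ p / l) * volume (bad y ε τ ∩ Set.Icc ξ (ξ + l)) ≤
        ENNReal.ofReal (ε ^ p / l) * ENNReal.ofReal (ε / 2 * l) := by
      calc ENNReal.ofReal (ε ^ p / l) * volume (bad y ε τ ∩ Set.Icc ξ (ξ + l))
          = ENNReal.ofReal (1 / l) * (ENNReal.ofReal (ε ^ p) * volume (bad y ε τ ∩ Set.Icc ξ (ξ + l))) := by
            rw [← mul_assoc, ← ENNReal.ofReal_mul (by positivity)]; congr 2; ring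
        _ ≤ ENNReal.ofReal (ε ^ (p + 1) / 2) := (by gcongr : _ ≤ _).trans h4
        _ = _ := by
            rw [← ENNReal.ofReal_mul (by positivity)]; congr 1
            rw [Real.rpow_add hε, Real.rpow_one]; field_simp
    have hpos : 0 < ε ^ p / l := by positivity
    exact (ENNReal.mul_le_mul_iff_right (by simpa using hpos) ENNReal.ofReal_ne_top).1 h5
  rwa [mul_div_cancel₀ _ two_ne_zero] at h2

lemma wap_of_small {y : ℝ → α} (h : ∀ ε > 0, ε ≤ 1 → ∃ l, RelDense {τ | Sm l (bad y ε τ) ε}) : WAP y := by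
  intro ε hε
  obtain ⟨l, a, ha, hr⟩ := h (min ε 1) (lt_min hε one_pos) (min_le_right _ _)
  refine ⟨l, a, ha, fun ξ => ?_⟩
  obtain ⟨τ, h1, h2⟩ := hr ξ
  have h2 : Sm l (bad y (min ε 1) τ) (min ε 1) := h2
  exact ⟨τ, h1, h2.bad_mono (min_le_left _ _)⟩

lemma wap_of_memWp {y : ℝ → α} (hy : StronglyMeasurable y) (d : α → α → ℝ) {p : ℝ} (hp : 1 ≤ p)
    (hd : ∀ ε > 0, ε ≤ 1 → ∀ t t', ENNReal.ofReal ε ≤ edist (y t) (y t') → ε ≤ d (y t) (y t'))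
    (h : ∀ ε > 0, ∃ l > 0, RelDense (APeriodsL d p l ε y)) : WAP y := by
  refine wap_of_small fun ε hε hε1 => ?_
  obtain ⟨l, hl, a, ha, hr⟩ := h ((ε ^ (p + 1) / 2) ^ (1 / p)) (by positivity)
  refine ⟨l, a, ha, fun ξ => ?_⟩
  obtain ⟨τ, h1, h2⟩ := hr ξ
  have h2 : weylD d p l y (fun t => y (t + τ)) < _ := h2
  exact ⟨τ, h1, sm_of_weylD d hp hl hε (bad_meas hy _ _) (fun t ht => hd ε hε hε1 _ _ ht) h2.le⟩

lemma sm_of_weylDinf {y : ℝ → α} (hy : StronglyMeasurable y) (d : α → α → ℝ)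
    (hd : ∀ ε > 0, ε ≤ 1 → ∀ t t', ENNReal.ofReal ε ≤ edist (y t) (y t') → ε ≤ d (y t) (y t'))
    {ε τ : ℝ} (hε : 0 < ε) (hε1 : ε ≤ 1)
    (h : weylDinf d 1 y (fun t => y (t + τ)) < ENNReal.ofReal (ε ^ 2 / 2)) : ∃ l, Sm l (bad y ε τ) ε := by
  have h1 := Filter.eventually_lt_of_limsup_lt h
  obtain ⟨l, hl, hl0⟩ := (h1.and (eventually_gt_atTop 0)).exists
  refine ⟨l, sm_of_weylD d le_rfl hl0 hε (bad_meas hy _ _) (fun t ht => hd ε hε hε1 _ _ ht) ?_⟩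
  refine hl.le.trans (le_of_eq ?_)
  congr 1
  rw [div_one, Real.rpow_one]
  norm_num

lemma weylDinf_le {y : ℝ → α} (hy : StronglyMeasurable y) (d : α → α → ℝ)
    (hd1 : ∀ x x', d x x' ≤ 1) {ε τ l : ℝ} (hε : 0 < ε)
    (hd : ∀ t t', edist (y t) (y t') < ENNReal.ofReal ε → d (y t) (y t') ≤ ε)
    (h : Sm l (bad y ε τ) ε) : weylDinf d 1 y (fun t => y (t + τ)) ≤ ENNReal.ofReal (2 * ε) := by
  refine Filter.limsup_le_of_le (by isBoundedDefault) ?_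
  filter_upwards [eventually_ge_atTop l] with L hL
  have hL0 : 0 < L := h.1.trans_le hL
  unfold weylD
  rw [div_one, ENNReal.rpow_one]
  refine iSup_le fun ξ => ?_
  have hm := bad_meas hy ε τ
  have h1 : ∫⁻ t in Set.Icc ξ (ξ + L), ENNReal.ofReal (d (y t) (y (t + τ)) ^ (1 : ℝ)) ≤
      ENNReal.ofReal (2 * ε * L) := by
    calc ∫⁻ t in Set.Icc ξ (ξ + L), ENNReal.ofReal (d (y t) (y (t + τ)) ^ (1 : ℝ))
        ≤ ∫⁻ t in Set.Icc ξ (ξ + L), (ENNReal.ofReal ε + (bad y ε τ).indicator (fun _ => 1) t) := by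
          refine lintegral_mono fun t => ?_
          rw [Real.rpow_one]
          by_cases ht : t ∈ bad y ε τ
          · rw [Set.indicator_of_mem ht]
            refine le_trans ?_ le_add_self
            rw [← ENNReal.ofReal_one]
            exact ENNReal.ofReal_le_ofReal (hd1 _ _)
          · exact (ENNReal.ofReal_le_ofReal (hd _ _ (notMem_bad.1 ht))).trans le_self_add
      _ = ENNReal.ofReal ε * ENNReal.ofReal L + volume (bad y ε τ ∩ Set.Icc ξ (ξ + L)) := by
          rw [lintegral_add_left measurable_const, lintegral_indicator_const hm, Measure.restrict_apply hm,
            lintegral_const]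
          simp
      _ ≤ ENNReal.ofReal ε * ENNReal.ofReal L + ENNReal.ofReal (ε * L) := by gcongr; exact h.2 L hL ξ
      _ = _ := by
          rw [← ENNReal.ofReal_mul hε.le, ← ENNReal.ofReal_add (by positivity) (by positivity)]
          congr 1; ring
  calc _ ≤ ENNReal.ofReal (1 / L) * ENNReal.ofReal (2 * ε * L) := by gcongr
    _ = _ := by rw [← ENNReal.ofReal_mul (by positivity)]; congr 1; field_simp

end Conv

section Dn
variable {α : Type*} [PseudoEMetricSpace α]

noncomputable def dn (y : ℝ → α) (τ : ℝ) : ℝ := sInf {r : ℝ | 0 < r ∧ ∃ l, Sm l (bad y r τ) r}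

lemma dn_bdd (y : ℝ → α) (τ : ℝ) : BddBelow {r : ℝ | 0 < r ∧ ∃ l, Sm l (bad y r τ) r} :=
  ⟨0, fun _ h => h.1.le⟩

lemma dn_ne (y : ℝ → α) (τ : ℝ) : {r : ℝ | 0 < r ∧ ∃ l, Sm l (bad y r τ) r}.Nonempty := by
  refine ⟨1, one_pos, 1, one_pos, fun L hL ξ => ?_⟩
  refine (measure_mono Set.inter_subset_right).trans ?_
  simp

lemma dn_le {y : ℝ → α} {τ r l : ℝ} (hr : 0 < r) (h : Sm l (bad y r τ) r) : dn y τ ≤ r :=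
  csInf_le (dn_bdd y τ) ⟨hr, l, h⟩

lemma dn_lt {y : ℝ → α} {τ r : ℝ} (h : dn y τ < r) : ∃ l, Sm l (bad y r τ) r := by
  obtain ⟨s, ⟨_, l, hs⟩, hsr⟩ := exists_lt_of_csInf_lt (dn_ne y τ) h
  exact ⟨l, hs.bad_mono hsr.le⟩

lemma dn_nonneg (y : ℝ → α) (τ : ℝ) : 0 ≤ dn y τ := Real.sInf_nonneg fun _ h => h.1.le

lemma dn_pn {y : ℝ → α} (hy : StronglyMeasurable y) (hw : WAP y) : PN (dn y) where
  nonneg := dn_nonneg y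
  zero := by
    refine le_antisymm (le_of_forall_pos_le_add fun ε hε => ?_) (dn_nonneg y 0)
    rw [zero_add]
    refine dn_le hε (l := 1) ⟨one_pos, fun L hL ξ => ?_⟩
    have : bad y ε 0 = ∅ := by
      ext t; simp [bad, hε]
    rw [this]; simp
  neg := by
    have gen : ∀ τ, dn y (-τ) ≤ dn y τ := fun τ => le_of_forall_gt_imp_ge_of_dense fun r hr => by
      obtain ⟨l, h⟩ := dn_lt hr
      exact dn_le ((dn_nonneg y τ).trans_lt hr) h.bad_neg
    intro τ
    refine le_antisymm (gen τ) ?_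
    have := gen (-τ)
    rwa [neg_neg] at this
  add := by
    intro σ τ
    refine le_of_forall_pos_le_add fun ε hε => ?_
    obtain ⟨l, h⟩ := dn_lt (show dn y σ < dn y σ + ε / 2 by linarith)
    obtain ⟨l', h'⟩ := dn_lt (show dn y τ < dn y τ + ε / 2 by linarith)
    have n1 := dn_nonneg y σ
    have n2 := dn_nonneg y τ
    have := dn_le (by positivity) (h.bad_add h' (by positivity) (by positivity))
    linarith
  cont := by
    rw [Metric.tendsto_nhds_nhds]
    intro ε hε
    obtain ⟨ω, hω, l, h⟩ := hw.transl hy (ε / 2) (by positivity)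
    refine ⟨ω, hω, fun {x} hx => ?_⟩
    rw [Real.dist_eq, sub_zero] at hx ⊢
    rw [abs_of_nonneg (dn_nonneg y x)]
    have := dn_le (by positivity) (h x hx)
    linarith

end Dn


section Congr

lemma ae_shift {α : Type*} {f f' : ℝ → α} (h : f =ᵐ[volume] f') (τ : ℝ) :
    (fun t => f (t + τ)) =ᵐ[volume] (fun t => f' (t + τ)) :=
  (measurePreserving_add_right volume τ).quasiMeasurePreserving.ae_eq_comp h

lemma weylD_congr {α : Type*} (d : α → α → ℝ) (p l : ℝ) {f f' g g' : ℝ → α} (h : f =ᵐ[volume] f')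
    (h' : g =ᵐ[volume] g') : weylD d p l f g = weylD d p l f' g' := by
  unfold weylD
  congr 1
  refine iSup_congr fun ξ => ?_
  congr 1
  refine lintegral_congr_ae (ae_restrict_of_ae ?_)
  filter_upwards [h, h'] with t a b
  rw [a, b]

lemma WMod_congr {α : Type*} (d : α → α → ℝ) {f f' : ℝ → α} (h : f =ᵐ[volume] f') : WMod d f = WMod d f' := by
  unfold WMod weylDinf
  simp only [fun l τ => weylD_congr d 1 l h (ae_shift h τ)]

lemma MemWp_congr {α : Type*} [TopologicalSpace α] (d : α → α → ℝ) (p : ℝ) (x₀ : α) {f f' : ℝ → α}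
    (h : f =ᵐ[volume] f') (hf : MemWp d p x₀ f) : MemWp d p x₀ f' := by
  obtain ⟨⟨h1, C, hC⟩, h2⟩ := hf
  refine ⟨⟨h1.congr h, C, fun ξ => ?_⟩, fun ε hε => ?_⟩
  · rw [← lintegral_congr_ae (ae_restrict_of_ae _)]
    · exact hC ξ
    · filter_upwards [h] with t a
      rw [a]
  · obtain ⟨l, hl, hr⟩ := h2 ε hε
    refine ⟨l, hl, ?_⟩
    unfold APeriodsL at hr ⊢
    simp only [fun τ => weylD_congr d p l h (ae_shift h τ)] at hr
    exact hr

end Congr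

section Equi

lemma rpow_add_le2 {p : ℝ} (hp : 1 ≤ p) {a b : ℝ} (ha : 0 ≤ a) (hb : 0 ≤ b) :
    (a + b) ^ p ≤ 2 ^ p * (a ^ p + b ^ p) := by
  have hp0 : 0 ≤ p := by linarith
  have h1 : (a + b) ^ p ≤ (2 * max a b) ^ p :=
    Real.rpow_le_rpow (by positivity) (by linarith [le_max_left a b, le_max_right a b]) hp0
  refine h1.trans ?_
  rw [Real.mul_rpow (by norm_num) (ha.trans (le_max_left a b))]
  have : (0 : ℝ) ≤ 2 ^ p := by positivity
  refine mul_le_mul_of_nonneg_left ?_ this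
  have ha' : 0 ≤ a ^ p := by positivity
  have hb' : 0 ≤ b ^ p := by positivity
  rcases max_choice a b with h | h <;> rw [h] <;> linarith

lemma rpow_add_le3 {p : ℝ} (hp : 1 ≤ p) {a b c : ℝ} (ha : 0 ≤ a) (hb : 0 ≤ b) (hc : 0 ≤ c) :
    (a + b + c) ^ p ≤ 4 ^ p * (a ^ p + b ^ p + c ^ p) := by
  have h1 := rpow_add_le2 hp (add_nonneg ha hb) hc
  have h2 := rpow_add_le2 hp ha hb
  have h4 : (4 : ℝ) ^ p = 2 ^ p * 2 ^ p := by
    rw [← Real.mul_rpow (by norm_num) (by norm_num)]; norm_num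
  have h5 : (1 : ℝ) ≤ 2 ^ p := Real.one_le_rpow (by norm_num) (by linarith)
  have hc' : 0 ≤ c ^ p := by positivity
  rw [h4]
  calc (a + b + c) ^ p ≤ 2 ^ p * ((a + b) ^ p + c ^ p) := h1
    _ ≤ 2 ^ p * (2 ^ p * (a ^ p + b ^ p) + 2 ^ p * c ^ p) := by
        gcongr
        nlinarith
    _ = _ := by ring

lemma equi {h : ℝ → ℝ} (hm : Measurable h) (h0 : ∀ t, 0 ≤ h t) {p : ℝ} (hp : 1 ≤ p) (C : ℝ)
    (hC : ∀ ξ, ∫⁻ t in Set.Icc ξ (ξ + 1), ENNReal.ofReal (h t ^ p) ≤ ENNReal.ofReal C)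
    (hap : ∀ κ > 0, ∃ l > 0, ∃ a > 0, ∀ ξ, ∃ τ ∈ Set.Icc ξ (ξ + a), ∃ D : ℝ → ℝ,
      (∀ t, 0 ≤ D t ∧ h t ≤ h (t + τ) + D t) ∧
      ∀ ζ, ∫⁻ t in Set.Icc ζ (ζ + l), ENNReal.ofReal (D t ^ p) ≤ ENNReal.ofReal (κ * l)) :
    ∀ ε > 0, ∃ M > 0, ∃ l > 0, ∀ ξ,
      ∫⁻ t in Set.Icc ξ (ξ + l), ENNReal.ofReal (max (h t - M) 0 ^ p) ≤ ENNReal.ofReal (ε * l) := by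
  intro ε hε
  have hp0 : 0 < p := by linarith
  have h2p : (0 : ℝ) < 2 ^ p := by positivity
  obtain ⟨l, hl, a, ha, hw⟩ := hap (ε / 2 / 2 ^ p) (by positivity)
  have hfin : ∫⁻ t in Set.Icc 0 (0 + (a + l + 1)), ENNReal.ofReal (h t ^ p) ≠ ⊤ := by
    have := doubling (volume.withDensity fun t => ENNReal.ofReal (h t ^ p)) 1 (max C 0) one_pos (le_max_right _ _)
      (fun ξ => by
        rw [withDensity_apply _ measurableSet_Icc]
        exact (hC ξ).trans (ENNReal.ofReal_le_ofReal (by simp))) (a + l + 1) (by linarith) 0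
    rw [withDensity_apply _ measurableSet_Icc] at this
    exact ne_top_of_le_ne_top ENNReal.ofReal_ne_top this
  have hmn : ∀ n : ℝ, Measurable (fun t => ENNReal.ofReal (max (h t - n) 0 ^ p)) := fun n =>
    (((hm.sub_const n).max measurable_const).pow_const p).ennreal_ofReal
  have hlim : Tendsto (fun n : ℕ => ∫⁻ t in Set.Icc 0 (0 + (a + l + 1)), ENNReal.ofReal (max (h t - n) 0 ^ p)) atTop
      (𝓝 (∫⁻ t in Set.Icc 0 (0 + (a + l + 1)), 0)) := by
    refine tendsto_lintegral_of_dominated_convergence (fun t => ENNReal.ofReal (h t ^ p)) (fun n => hmn n)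
      (fun n => Eventually.of_forall fun t => ?_) hfin (Eventually.of_forall fun t => ?_)
    · refine ENNReal.ofReal_le_ofReal (Real.rpow_le_rpow (le_max_right _ _) (max_le ?_ (h0 t)) hp0.le)
      have : (0 : ℝ) ≤ n := Nat.cast_nonneg n
      linarith
    · refine tendsto_const_nhds.congr' ?_
      filter_upwards [eventually_ge_atTop ⌈h t⌉₊] with n hn
      have : h t ≤ n := (Nat.le_ceil _).trans (by exact_mod_cast hn)
      rw [max_eq_right (by linarith), Real.zero_rpow hp0.ne', ENNReal.ofReal_zero]
  rw [lintegral_zero] at hlim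
  obtain ⟨n, hn, hn1⟩ := ((hlim.eventually (gt_mem_nhds (show 0 < ENNReal.ofReal (ε / 2 / 2 ^ p * l) by
    rw [ENNReal.ofReal_pos]; positivity))).and (eventually_ge_atTop 1)).exists
  refine ⟨n, by exact_mod_cast hn1, l, hl, fun ξ => ?_⟩
  obtain ⟨τ, hτ, D, hD1, hD2⟩ := hw (-ξ)
  set q : ℝ → ℝ≥0∞ := fun t => ENNReal.ofReal (max (h t - n) 0 ^ p) with hq
  have hqs : Measurable (fun t => q (t + τ)) := (hmn n).comp (measurable_id.add_const τ)
  have hsh : ∫⁻ t in Set.Icc ξ (ξ + l), q (t + τ) ≤ ENNReal.ofReal (ε / 2 / 2 ^ p * l) := by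
    have e := (measurePreserving_add_right volume τ).setLIntegral_comp_emb
      (MeasurableEquiv.addRight τ).measurableEmbedding q (Set.Icc ξ (ξ + l))
    rw [Set.image_add_const_Icc] at e
    rw [e]
    refine le_trans (lintegral_mono_set ?_) hn.le
    apply Set.Icc_subset_Icc
    · linarith [hτ.1]
    · linarith [hτ.2]
  have hpt : ∀ t, q t ≤ ENNReal.ofReal (2 ^ p) * (q (t + τ) + ENNReal.ofReal (D t ^ p)) := by
    intro t
    have m0 : 0 ≤ max (h (t + τ) - n) 0 := le_max_right _ _
    have d0 := (hD1 t).1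
    rw [hq]; dsimp only
    rw [← ENNReal.ofReal_add (by positivity) (by positivity), ← ENNReal.ofReal_mul h2p.le]
    refine ENNReal.ofReal_le_ofReal (le_trans (Real.rpow_le_rpow (le_max_right _ _) ?_ hp0.le) (rpow_add_le2 hp m0 d0))
    refine max_le ?_ (by positivity)
    linarith [(hD1 t).2, le_max_left (h (t + τ) - n) 0]
  calc ∫⁻ t in Set.Icc ξ (ξ + l), q t
      ≤ ∫⁻ t in Set.Icc ξ (ξ + l), ENNReal.ofReal (2 ^ p) * (q (t + τ) + ENNReal.ofReal (D t ^ p)) :=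
        lintegral_mono hpt
    _ = ENNReal.ofReal (2 ^ p) * ((∫⁻ t in Set.Icc ξ (ξ + l), q (t + τ)) +
          ∫⁻ t in Set.Icc ξ (ξ + l), ENNReal.ofReal (D t ^ p)) := by
        rw [lintegral_const_mul' _ _ ENNReal.ofReal_ne_top, lintegral_add_left hqs]
    _ ≤ ENNReal.ofReal (2 ^ p) * (ENNReal.ofReal (ε / 2 / 2 ^ p * l) + ENNReal.ofReal (ε / 2 / 2 ^ p * l)) := by
        gcongr
        exact hD2 ξ
    _ = _ := by
        rw [← ENNReal.ofReal_add (by positivity) (by positivity), ← ENNReal.ofReal_mul h2p.le]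
        congr 1; field_simp; ring

lemma memWp_of_dom {U : Type*} [MetricSpace U] {f : ℝ → U} (hf : StronglyMeasurable f) (hw : WAP f) (x₀ : U)
    {h : ℝ → ℝ} (hm : Measurable h) (hfh : ∀ t, dist (f t) x₀ ≤ h t) {p : ℝ} (hp : 1 ≤ p) (C : ℝ)
    (hC : ∀ ξ, ∫⁻ t in Set.Icc ξ (ξ + 1), ENNReal.ofReal (h t ^ p) ≤ ENNReal.ofReal C)
    (heq : ∀ ε > 0, ∃ M > 0, ∃ l > 0, ∀ ξ,
      ∫⁻ t in Set.Icc ξ (ξ + l), ENNReal.ofReal (max (h t - M) 0 ^ p) ≤ ENNReal.ofReal (ε * l)) :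
    MemWp dist p x₀ f := by
  have hp0 : 0 < p := by linarith
  refine ⟨⟨hf.aestronglyMeasurable, C, fun ξ => (lintegral_mono fun t => ?_).trans (hC ξ)⟩, fun ε hε => ?_⟩
  · exact ENNReal.ofReal_le_ofReal (Real.rpow_le_rpow dist_nonneg (hfh t) hp0.le)
  have h4p : (0 : ℝ) < 4 ^ p := by positivity
  have hεp : 0 < ε ^ p := by positivity
  obtain ⟨M, hM, l, hl, hq⟩ := heq (ε ^ p / (16 * 4 ^ p)) (by positivity)
  set q : ℝ → ℝ≥0∞ := fun t => ENNReal.ofReal (max (h t - M) 0 ^ p) with hqd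
  have hqm : Measurable q := (((hm.sub_const M).max measurable_const).pow_const p).ennreal_ofReal
  have hq2 : ∀ L ≥ l, ∀ ξ, ∫⁻ t in Set.Icc ξ (ξ + L), q t ≤ ENNReal.ofReal (2 * (ε ^ p / (16 * 4 ^ p)) * L) := by
    intro L hL ξ
    have := doubling (volume.withDensity q) l (ε ^ p / (16 * 4 ^ p)) hl (by positivity)
      (fun ξ => by rw [withDensity_apply _ measurableSet_Icc]; exact hq ξ) L hL ξ
    rwa [withDensity_apply _ measurableSet_Icc] at this
  set K : ℝ := 4 ^ p * (2 * M) ^ p with hK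
  have hK0 : 0 < K := by positivity
  set δ := min (ε / 4) (ε ^ p / (8 * K)) with hδ
  have hδ0 : 0 < δ := lt_min (by positivity) (by positivity)
  obtain ⟨l', a, ha, hr⟩ := hw δ hδ0
  set L := max l l' with hL
  have hL0 : 0 < L := hl.trans_le (le_max_left _ _)
  refine ⟨L, hL0, a, ha, fun ξ => ?_⟩
  obtain ⟨τ, hτ1, hτ2⟩ := hr ξ
  have hτ2 : Sm l' (bad f δ τ) δ := hτ2
  refine ⟨τ, hτ1, ?_⟩
  change weylD dist p L f (fun t => f (t + τ)) < ENNReal.ofReal ε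
  have hbm := bad_meas hf δ τ
  have hqs : Measurable (fun t => q (t + τ)) := hqm.comp (measurable_id.add_const τ)
  have hpt : ∀ t, ENNReal.ofReal (dist (f t) (f (t + τ)) ^ p) ≤
      (ENNReal.ofReal (ε ^ p / 4) + (bad f δ τ).indicator (fun _ => ENNReal.ofReal K) t) +
      (ENNReal.ofReal (4 ^ p) * q t + ENNReal.ofReal (4 ^ p) * q (t + τ)) := by
    intro t
    by_cases ht : t ∈ bad f δ τ
    · rw [Set.indicator_of_mem ht]
      refine le_trans ?_ (add_le_add_left le_add_self _)
      have m0 : 0 ≤ max (h t - M) 0 := le_max_right _ _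
      have m1 : 0 ≤ max (h (t + τ) - M) 0 := le_max_right _ _
      rw [hqd]; dsimp only
      rw [← ENNReal.ofReal_mul h4p.le, ← ENNReal.ofReal_mul h4p.le, ← ENNReal.ofReal_add (by positivity) (by positivity),
        ← ENNReal.ofReal_add (by positivity) (by positivity)]
      refine ENNReal.ofReal_le_ofReal ?_
      have e1 : dist (f t) (f (t + τ)) ≤ 2 * M + max (h t - M) 0 + max (h (t + τ) - M) 0 := by
        have := dist_triangle_right (f t) (f (t + τ)) x₀
        linarith [hfh t, hfh (t + τ), le_max_left (h t - M) 0, le_max_left (h (t + τ) - M) 0]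
      refine (Real.rpow_le_rpow dist_nonneg e1 hp0.le).trans ((rpow_add_le3 hp (by positivity) m0 m1).trans
        (le_of_eq ?_))
      rw [hK]; ring
    · refine le_trans ?_ (le_self_add.trans le_self_add)
      refine ENNReal.ofReal_le_ofReal ?_
      have e1 : dist (f t) (f (t + τ)) ≤ ε / 4 := by
        have := notMem_bad.1 ht
        rw [edist_dist, ENNReal.ofReal_lt_ofReal_iff hδ0] at this
        exact this.le.trans (min_le_left _ _)
      refine (Real.rpow_le_rpow dist_nonneg e1 hp0.le).trans ?_
      rw [Real.div_rpow hε.le (by norm_num)]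
      have : (4 : ℝ) ≤ 4 ^ p := by
        simpa using Real.rpow_le_rpow_of_exponent_le (x := 4) (by norm_num) hp
      gcongr
  have hIntg : ∀ ξ, ENNReal.ofReal (1 / L) * ∫⁻ t in Set.Icc ξ (ξ + L), ENNReal.ofReal (dist (f t) (f (t + τ)) ^ p) ≤
      ENNReal.ofReal (ε ^ p * (3 / 4)) := by
    intro ξ
    have i1 : ∫⁻ t in Set.Icc ξ (ξ + L), q (t + τ) ≤ ENNReal.ofReal (2 * (ε ^ p / (16 * 4 ^ p)) * L) := by
      have e := (measurePreserving_add_right volume τ).setLIntegral_comp_emb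
        (MeasurableEquiv.addRight τ).measurableEmbedding q (Set.Icc ξ (ξ + L))
      rw [Set.image_add_const_Icc] at e
      rw [e, show ξ + L + τ = (ξ + τ) + L by ring]
      exact hq2 L (le_max_left _ _) _
    have i2 := hq2 L (le_max_left _ _) ξ
    have i3 : volume (bad f δ τ ∩ Set.Icc ξ (ξ + L)) ≤ ENNReal.ofReal (ε ^ p / (8 * K) * L) :=
      (hτ2.2 L (le_max_right _ _) ξ).trans (ENNReal.ofReal_le_ofReal (by gcongr; exact min_le_right _ _))
    calc ENNReal.ofReal (1 / L) * ∫⁻ t in Set.Icc ξ (ξ + L), ENNReal.ofReal (dist (f t) (f (t + τ)) ^ p)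
        ≤ ENNReal.ofReal (1 / L) * ∫⁻ t in Set.Icc ξ (ξ + L), ((ENNReal.ofReal (ε ^ p / 4) +
            (bad f δ τ).indicator (fun _ => ENNReal.ofReal K) t) +
            (ENNReal.ofReal (4 ^ p) * q t + ENNReal.ofReal (4 ^ p) * q (t + τ))) := by
          gcongr with t
          exact hpt t
      _ = ENNReal.ofReal (1 / L) * ((ENNReal.ofReal (ε ^ p / 4) * ENNReal.ofReal L +
            ENNReal.ofReal K * volume (bad f δ τ ∩ Set.Icc ξ (ξ + L))) +
            (ENNReal.ofReal (4 ^ p) * (∫⁻ t in Set.Icc ξ (ξ + L), q t) +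
             ENNReal.ofReal (4 ^ p) * ∫⁻ t in Set.Icc ξ (ξ + L), q (t + τ))) := by
          have mm : Measurable (fun t => ENNReal.ofReal (4 ^ p) * q t + ENNReal.ofReal (4 ^ p) * q (t + τ)) :=
            (hqm.const_mul _).add (hqs.const_mul _)
          rw [lintegral_add_right _ mm, lintegral_add_left measurable_const,
            lintegral_indicator_const hbm, Measure.restrict_apply hbm, lintegral_add_left (hqm.const_mul _),
            lintegral_const_mul' _ _ ENNReal.ofReal_ne_top, lintegral_const_mul' _ _ ENNReal.ofReal_ne_top,
            lintegral_const]
          simp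
      _ ≤ ENNReal.ofReal (1 / L) * ((ENNReal.ofReal (ε ^ p / 4) * ENNReal.ofReal L +
            ENNReal.ofReal K * ENNReal.ofReal (ε ^ p / (8 * K) * L)) +
            (ENNReal.ofReal (4 ^ p) * ENNReal.ofReal (2 * (ε ^ p / (16 * 4 ^ p)) * L) +
             ENNReal.ofReal (4 ^ p) * ENNReal.ofReal (2 * (ε ^ p / (16 * 4 ^ p)) * L))) := by
          gcongr
      _ ≤ _ := by
          rw [← ENNReal.ofReal_mul (by positivity), ← ENNReal.ofReal_mul (by positivity),
            ← ENNReal.ofReal_mul (by positivity), ← ENNReal.ofReal_add (by positivity) (by positivity),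
            ← ENNReal.ofReal_add (by positivity) (by positivity),
            ← ENNReal.ofReal_add (by positivity) (by positivity), ← ENNReal.ofReal_mul (by positivity)]
          refine ENNReal.ofReal_le_ofReal ?_
          have : 1 / L * (ε ^ p / 4 * L + K * (ε ^ p / (8 * K) * L) + (4 ^ p * (2 * (ε ^ p / (16 * 4 ^ p)) * L) +
            4 ^ p * (2 * (ε ^ p / (16 * 4 ^ p)) * L))) = ε ^ p * (1 / 4 + 1 / 8 + 1 / 4) := by
            field_simp; ring
          rw [this]
          nlinarith
  unfold weylD
  have hs := iSup_le hIntg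
  calc _ ≤ ENNReal.ofReal (ε ^ p * (3 / 4)) ^ (1 / p) := ENNReal.rpow_le_rpow hs (by positivity)
    _ < ENNReal.ofReal (ε ^ p) ^ (1 / p) := by
        refine ENNReal.rpow_lt_rpow ((ENNReal.ofReal_lt_ofReal_iff hεp).2 (by linarith)) (by positivity)
    _ = ENNReal.ofReal ε := by
        rw [ENNReal.ofReal_rpow_of_pos hεp, ← Real.rpow_mul hε.le, mul_one_div_cancel hp0.ne', Real.rpow_one]

end Equi


section Core

lemma mem_WMod_of_dn {α : Type*} [PseudoEMetricSpace α] {y : ℝ → α} (hy : StronglyMeasurable y) (d : α → α → ℝ)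
    (hd : ∀ ε > 0, ε ≤ 1 → ∀ t t', ENNReal.ofReal ε ≤ edist (y t) (y t') → ε ≤ d (y t) (y t'))
    (μ C : ℝ) (h : ∀ τ, ‖Complex.exp (Complex.I * ((μ * τ : ℝ) : ℂ)) - 1‖ ≤ C * dn y τ) : μ ∈ WMod d y := by
  intro τ hτ
  have h1 : Tendsto (fun j => dn y (τ j)) atTop (𝓝 0) := by
    rw [Metric.tendsto_atTop']
    intro ε hε
    set e := min (ε / 2) 1 with he
    have he0 : 0 < e := lt_min (by positivity) one_pos
    have h2 := hτ.eventually (gt_mem_nhds (show 0 < ENNReal.ofReal (e ^ 2 / 2) by rw [ENNReal.ofReal_pos]; positivity))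
    obtain ⟨N, hN⟩ := eventually_atTop.1 h2
    refine ⟨N, fun n hn => ?_⟩
    obtain ⟨l, hl⟩ := sm_of_weylDinf hy d hd he0 (min_le_right _ _) (hN n hn.le)
    have := dn_le he0 hl
    rw [Real.dist_eq, sub_zero, abs_of_nonneg (dn_nonneg _ _)]
    have : e ≤ ε / 2 := min_le_left _ _
    linarith
  rw [tendsto_iff_norm_sub_tendsto_zero]
  have h3 := h1.const_mul C
  rw [mul_zero] at h3
  exact squeeze_zero (fun _ => norm_nonneg _) (fun j => h (τ j)) h3

variable {U : Type*} [MetricSpace U]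

lemma bdist_ge (x x' : U) (ε : ℝ) (hε1 : ε ≤ 1) (h : ENNReal.ofReal ε ≤ edist x x') : ε ≤ bdist x x' := by
  rw [edist_dist, ENNReal.ofReal_le_ofReal_iff dist_nonneg] at h
  exact le_min hε1 h

lemma clDist_ge (A B : Closeds U) (ε : ℝ) (hε1 : ε ≤ 1) (h : ENNReal.ofReal ε ≤ edist A B) : ε ≤ clDist A B := by
  unfold clDist
  refine (ENNReal.ofReal_le_iff_le_toReal ?_).1 (le_min ?_ h)
  · exact ne_top_of_le_ne_top ENNReal.one_ne_top (min_le_left _ _)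
  · rw [← ENNReal.ofReal_one]; exact ENNReal.ofReal_le_ofReal hε1

lemma clb_ne_top {A B : Closeds U} (hA : (A : Set U).Nonempty) (hB : (B : Set U).Nonempty)
    (bA : Bornology.IsBounded (A : Set U)) (bB : Bornology.IsBounded (B : Set U)) : edist A B ≠ ⊤ :=
  Metric.hausdorffEDist_ne_top_of_nonempty_of_bounded hA hB bA bB

lemma clbDist_ge {A B : Closeds U} (hA : (A : Set U).Nonempty) (hB : (B : Set U).Nonempty)
    (bA : Bornology.IsBounded (A : Set U)) (bB : Bornology.IsBounded (B : Set U))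
    (ε : ℝ) (h : ENNReal.ofReal ε ≤ edist A B) : ε ≤ clbDist A B :=
  (ENNReal.ofReal_le_iff_le_toReal (clb_ne_top hA hB bA bB)).1 h

lemma core [CompleteSpace U] (x₀ : U)
    (g : ℝ → U) (hg : MemWp bdist 1 x₀ g) (gm : StronglyMeasurable g)
    (p : ℝ) (hp : 1 ≤ p)
    (F : ℝ → Closeds U) (hFne : ∀ t : ℝ, (F t : Set U).Nonempty)
    (hFbdd : ∀ t : ℝ, Bornology.IsBounded (F t : Set U))
    (hF : MemWp clbDist p (⟨{x₀}, isClosed_singleton⟩ : Closeds U) F) (Fm : StronglyMeasurable F)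
    (η : ℝ → ℝ) (hηmono : StrictMonoOn η (Set.Ici 0)) (hη0 : η 0 = 0)
    (hηpos : ∀ t > (0 : ℝ), 0 < η t) :
    ∃ f : ℝ → U, MemWp dist p x₀ f ∧
      WMod bdist f ⊆ WMod bdist g + WMod clDist F ∧
      (∀ t, f t ∈ (F t : Set U)) ∧
      (∀ t, dist (f t) (g t) ≤ Metric.infDist (g t) (F t) + η (Metric.infDist (g t) (F t))) := by
  have hp0 : 0 < p := by linarith
  have wg : WAP g := wap_of_memWp gm bdist le_rfl (fun ε _ h1 t t' h => bdist_ge _ _ ε h1 h) hg.2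
  have wF : WAP F := wap_of_memWp Fm clbDist hp
    (fun ε _ _ t t' h => clbDist_ge (hFne _) (hFne _) (hFbdd _) (hFbdd _) ε h) hF.2
  set X : ℝ → U × Closeds U := fun t => (g t, F t) with hXd
  have wX : WAP X := wg.prod wF Fm
  have cg : Ctrl X g := (Ctrl.refl X).comp g 1 one_pos fun t t' ε _ h => by
    rw [Prod.edist_eq, max_lt_iff] at h; rw [one_mul]; exact h.1
  have cF : Ctrl X F := (Ctrl.refl X).comp F 1 one_pos fun t t' ε _ h => by
    rw [Prod.edist_eq, max_lt_iff] at h; rw [one_mul]; exact h.2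
  obtain ⟨f, f1, f2, f3, f4⟩ := selection wX hFne gm Fm cg cF η hηmono hη0 hηpos
  refine ⟨f, ?_, ?_, f3, f4⟩
  · set P : Closeds U := ⟨{x₀}, isClosed_singleton⟩ with hP
    have hPn : (P : Set U).Nonempty := ⟨x₀, rfl⟩
    have hPb : Bornology.IsBounded (P : Set U) := Bornology.isBounded_singleton
    set h : ℝ → ℝ := fun t => clbDist (F t) P with hh
    have hm : Measurable h := by
      have : StronglyMeasurable (fun t => edist (F t) P) := Fm.edist stronglyMeasurable_const
      exact this.measurable.ennreal_toReal
    have tri : ∀ t t', h t ≤ h t' + clbDist (F t) (F t') := by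
      intro t t'
      have := Metric.hausdorffDist_triangle (s := (F t : Set U)) (t := (F t' : Set U)) (u := (P : Set U))
        (clb_ne_top (hFne _) (hFne _) (hFbdd _) (hFbdd _))
      rw [add_comm]; exact this
    obtain ⟨⟨_, C, hC⟩, hap⟩ := hF
    refine memWp_of_dom f1 (f2.wap wX) x₀ hm (fun t => ?_) hp C hC (equi hm (fun t => Metric.hausdorffDist_nonneg) hp C hC ?_)
    · have := Metric.infDist_le_hausdorffDist_of_mem (s := (F t : Set U)) (t := (P : Set U)) (f3 t)
        (clb_ne_top (hFne _) hPn (hFbdd _) hPb)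
      have e : Metric.infDist (f t) (P : Set U) = dist (f t) x₀ := Metric.infDist_singleton
      rw [e] at this
      exact this
    · intro κ hκ
      obtain ⟨l, hl, a, ha, hr⟩ := hap (κ ^ (1 / p)) (by positivity)
      refine ⟨l, hl, a, ha, fun ξ => ?_⟩
      obtain ⟨τ, hτ1, hτ2⟩ := hr ξ
      have hτ2 : weylD clbDist p l F (fun t => F (t + τ)) < ENNReal.ofReal (κ ^ (1 / p)) := hτ2
      refine ⟨τ, hτ1, fun t => clbDist (F t) (F (t + τ)), fun t => ⟨Metric.hausdorffDist_nonneg, tri _ _⟩, fun ζ => ?_⟩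
      unfold weylD at hτ2
      rw [← ENNReal.ofReal_rpow_of_nonneg (by positivity) (by positivity),
        ENNReal.rpow_lt_rpow_iff (by positivity)] at hτ2
      have h1 := (le_iSup (fun ξ => ENNReal.ofReal (1 / l) *
        ∫⁻ t in Set.Icc ξ (ξ + l), ENNReal.ofReal (clbDist (F t) (F (t + τ)) ^ p)) ζ).trans hτ2.le
      have h2 : ENNReal.ofReal l * (ENNReal.ofReal (1 / l) *
        ∫⁻ t in Set.Icc ζ (ζ + l), ENNReal.ofReal (clbDist (F t) (F (t + τ)) ^ p)) ≤
          ENNReal.ofReal l * ENNReal.ofReal κ := by gcongr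
      rw [← mul_assoc, ← ENNReal.ofReal_mul hl.le, mul_one_div_cancel hl.ne', ENNReal.ofReal_one, one_mul,
        ← ENNReal.ofReal_mul hl.le, mul_comm l κ] at h2
      exact h2
  · intro lam hlam
    have hkey : ∀ ε > 0, ∃ δ > 0, ∀ τ, dn g τ < δ → dn F τ < δ →
        ‖Complex.exp (Complex.I * ((lam * τ : ℝ) : ℂ)) - 1‖ < ε := by
      by_contra hcon
      push Not at hcon
      obtain ⟨ε, hε, hcon⟩ := hcon
      choose τ t1 t2 t3 using fun n : ℕ => hcon (1 / ((n : ℝ) + 1)) (by positivity)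
      have hret : Tendsto (fun j => weylDinf bdist 1 f (fun t => f (t + τ j))) atTop (nhds 0) := by
        rw [ENNReal.tendsto_nhds_zero]
        intro e he
        obtain ⟨r, hr0, hre⟩ : ∃ r : ℝ, 0 < r ∧ ENNReal.ofReal (2 * r) ≤ e := by
          rcases eq_or_ne e ⊤ with h | h
          · exact ⟨1, one_pos, by rw [h]; exact le_top⟩
          · refine ⟨e.toReal / 2, half_pos (ENNReal.toReal_pos he.ne' h), ?_⟩
            rw [mul_div_cancel₀ _ two_ne_zero, ENNReal.ofReal_toReal h]
        obtain ⟨δ, hδ, hδ'⟩ := f2 r hr0 r hr0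
        have hlim := tendsto_one_div_add_atTop_nhds_zero_nat (𝕜 := ℝ)
        filter_upwards [hlim.eventually (gt_mem_nhds (half_pos hδ))] with n hn
        obtain ⟨l1, s1⟩ := dn_lt ((t1 n).trans hn)
        obtain ⟨l2, s2⟩ := dn_lt ((t2 n).trans hn)
        have s3 := s1.union s2 (by positivity) (by positivity)
        have s4 : Sm (max l1 l2) (bad X δ (τ n)) δ := by
          refine s3.mono le_rfl (fun t ht => ?_) (by linarith)
          simp only [bad, X, Prod.edist_eq, Set.mem_ofPred_eq, le_max_iff] at ht
          have hle : δ / 2 ≤ δ := by linarith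
          rcases ht with h | h
          · exact Or.inl (bad_anti g hle _ h)
          · exact Or.inr (bad_anti F hle _ h)
        obtain ⟨L, hL, hfin⟩ := hδ' _ s4.1
        refine (weylDinf_le f1 bdist (fun x x' => min_le_left _ _) hr0 (fun t t' h => ?_) (hfin _ s4)).trans hre
        rw [edist_dist, ENNReal.ofReal_lt_ofReal_iff hr0] at h
        exact (min_le_right _ _).trans h.le
      have := hlam τ hret
      rw [tendsto_iff_norm_sub_tendsto_zero] at this
      obtain ⟨n, hn⟩ := (this.eventually (gt_mem_nhds hε)).exists
      exact absurd hn (not_lt.2 (t3 n))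
    have hrd : ∀ ε > 0, RelDense {τ | dn g τ < ε ∧ dn F τ < ε} := by
      intro ε hε
      obtain ⟨l, a, ha, hr⟩ := wg.pair wF Fm (ε / 2) (by positivity)
      refine ⟨a, ha, fun ξ => ?_⟩
      obtain ⟨τ, h1, h2⟩ := hr ξ
      have h2 : Sm l (bad g (ε / 2) τ) (ε / 2) ∧ Sm l (bad F (ε / 2) τ) (ε / 2) := h2
      have e : ε / 2 < ε := by linarith
      exact ⟨τ, h1, (dn_le (by positivity) h2.1).trans_lt e, (dn_le (by positivity) h2.2).trans_lt e⟩
    obtain ⟨μ, C, _, hμ⟩ := duality (dn g) (dn F) (dn_pn gm wg) (dn_pn Fm wF) hrd lam hkey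
    rw [← add_sub_cancel μ lam]
    exact Set.add_mem_add
      (mem_WMod_of_dn gm bdist (fun ε _ h1 t t' h => bdist_ge _ _ ε h1 h) μ C fun τ => (hμ τ).1)
      (mem_WMod_of_dn Fm clDist (fun ε _ h1 t t' h => clDist_ge _ _ ε h1 h) _ C fun τ => (hμ τ).2)

end Core

open TopologicalSpace in
/-- **Theorem 1, second part (selection theorem for `W_p(ℝ,U)`).**
If moreover `F ∈ W_p(ℝ, cl_b U)` for some `p ≥ 1`, then the selection `f` can be chosen
in `W_p(ℝ,U)`. -/
theorem weyl_ap_selection_order_p {U : Type*} [MetricSpace U] [CompleteSpace U] (x₀ : U)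
    (g : ℝ → U) (hg : MemWp bdist 1 x₀ g)
    (p : ℝ) (hp : 1 ≤ p)
    (F : ℝ → Closeds U) (hFne : ∀ t : ℝ, (F t : Set U).Nonempty)
    (hFbdd : ∀ t : ℝ, Bornology.IsBounded (F t : Set U))
    (hF : MemWp clbDist p (⟨{x₀}, isClosed_singleton⟩ : Closeds U) F)
    (η : ℝ → ℝ) (hηmono : StrictMonoOn η (Set.Ici 0)) (hη0 : η 0 = 0)
    (hηpos : ∀ t > (0 : ℝ), 0 < η t) :
    ∃ f : ℝ → U, MemWp dist p x₀ f ∧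
      WMod bdist f ⊆ WMod bdist g + WMod clDist F ∧
      (∀ᵐ t ∂(volume : Measure ℝ), f t ∈ (F t : Set U)) ∧
      (∀ᵐ t ∂(volume : Measure ℝ),
        dist (f t) (g t) ≤
          Metric.infDist (g t) (F t) + η (Metric.infDist (g t) (F t))) := by
  classical
  obtain ⟨g', gm, hgg⟩ := hg.1.1
  obtain ⟨F₁, Fm₁, hFF₁⟩ := hF.1.1
  set N := toMeasurable volume {t | F t ≠ F₁ t} with hN
  have hN0 : volume N = 0 := by rw [hN, measure_toMeasurable]; exact hFF₁
  have hNs : {t | F t ≠ F₁ t} ⊆ N := subset_toMeasurable _ _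
  set P : Closeds U := ⟨{x₀}, isClosed_singleton⟩ with hP
  set F' : ℝ → Closeds U := fun t => if t ∈ N then P else F₁ t with hF'
  have Fm : StronglyMeasurable F' :=
    StronglyMeasurable.ite (measurableSet_toMeasurable _ _) stronglyMeasurable_const Fm₁
  have hval : ∀ t, F' t = P ∨ F' t = F t := by
    intro t
    by_cases ht : t ∈ N
    · exact Or.inl (if_pos ht)
    · right
      have h1 : F' t = F₁ t := if_neg ht
      rw [h1]
      by_contra hc
      exact ht (hNs (Ne.symm hc))
  have hFF : F =ᵐ[volume] F' := by
    have : ∀ᵐ t ∂(volume : Measure ℝ), t ∉ N := measure_eq_zero_iff_ae_notMem.1 hN0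
    filter_upwards [this, hFF₁] with t ht h
    rw [h]
    exact (if_neg ht).symm
  obtain ⟨f, a1, a2, a3, a4⟩ := core x₀ g' (MemWp_congr _ _ _ hgg hg) gm p hp F'
    (fun t => by
      rcases hval t with h | h <;> rw [h]
      · exact ⟨x₀, rfl⟩
      · exact hFne t)
    (fun t => by
      rcases hval t with h | h <;> rw [h]
      · exact Bornology.isBounded_singleton
      · exact hFbdd t)
    (MemWp_congr _ _ _ hFF hF) Fm η hηmono hη0 hηpos
  refine ⟨f, a1, ?_, ?_, ?_⟩
  · rw [WMod_congr bdist hgg, WMod_congr clDist hFF]; exact a2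
  · filter_upwards [hFF] with t ht
    rw [ht]; exact a3 t
  · filter_upwards [hFF, hgg] with t ht h
    rw [ht, h]; exact a4 t
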